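/- arXiv:1305.2206 — 2 statements merged into one kernel-verified Lean document; each statement's English description precedes it below -/
import Mathlib

section
/- Let k ≥ 1 and x, y, e ∈ ℕ with e + 1 ≤ x. The number of watermelon configurations (p_0,…,p_{k−1}) of k paths of length x and deviation y whose bottom path has exactly e returns (indices 1 ≤ t ≤ x with p_0(t) = 0) equals the number of k-tuples (q_0,…,q_{k−1}) of functions such that (q_0,…,q_{k−2}) is a watermelon configuration of k−1 paths of length x and deviation y, and q_{k−1} : {0,…,x−e−1} → ℕ satisfies |q_{k−1}(t+1) − q_{k−1}(t)| = 1 for all t < x−e−1, q_{k−1}(0) = 2(k−1), q_{k−1}(x−e−1) + 3 = y + 2k + e, and (when k ≥ 2) q_{k−2}(t) < q_{k−1}(t) for all 0 ≤ t ≤ x−e−1. -/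
/-- A watermelon configuration of `m` paths of length `x` and deviation `y`:
`m` non-intersecting paths with unit northeast/southeast steps staying weakly
above the x-axis (automatic in `ℕ`), with `p i` starting at height `2i` and
ending at height `y + 2i`. -/
def IsWatermelon (m x y : ℕ) (p : Fin m → Fin (x+1) → ℕ) : Prop :=
  (∀ (i : Fin m) (t : ℕ) (ht : t < x),
      p i ⟨t + 1, by omega⟩ = p i ⟨t, by omega⟩ + 1 ∨
      p i ⟨t, by omega⟩ = p i ⟨t + 1, by omega⟩ + 1) ∧
  (∀ i : Fin m, p i ⟨0, by omega⟩ = 2 * (i : ℕ) ∧ p i ⟨x, by omega⟩ = y + 2 * (i : ℕ)) ∧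
  (∀ (i : Fin m) (hi : (i : ℕ) + 1 < m) (t : Fin (x+1)), p i t < p ⟨(i : ℕ) + 1, hi⟩ t)

/-!
By the Karlin–McGregor theorem, watermelons are counted, with weight `X` per return of the bottom
path, by the determinant of the polynomials `R i h` that enumerate by returns the single paths from
height `2 * i` to height `h`. If the starting height is instead distributed geometrically, that is,
if `R i` is replaced by `G i = ∑ j ≤ i, (X - 1) ^ (i - j) * R j`, which does not change the
determinant, then `G i h = f i h + (X - 1) * G i (h + 2)` with `f i h` the number of all paths:
this holds for length zero and is preserved by the weight at height zero. Row operations therefore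
leave `X` in the last row only, and iterating the same relation identifies the `X ^ e` coefficient
of that row as the number of paths whose last `e + 1` steps go up, towards a higher endpoint.

So the `X ^ e` coefficient of the determinant is again a Karlin–McGregor determinant, for families
whose top path climbs during its last `e + 1` steps. The lower paths cannot catch up with it there,
so that these steps can be cut off.
-/

namespace Watermelon

open Polynomial

section Walks

variable {V : Type*} [DecidableEq V]

/-- The walks `a = v₀, v₁, …, vₙ = v` in `V` with `vₜ ∈ pred t vₜ₊₁` for all `t < n`. Steps are
encoded by the finite sets of possible predecessors, so that the walks form a `Finset`. -/
def walks (pred : ℕ → V → Finset V) (a : V) : (n : ℕ) → V → Finset (Fin (n + 1) → V)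
  | 0, v => if v = a then {fun _ => a} else ∅
  | n + 1, v => (pred n v).biUnion fun u =>
      (walks pred a n u).image fun p => Fin.snoc (α := fun _ => V) p v

theorem mem_walks {pred : ℕ → V → Finset V} {a : V} {n : ℕ} {v : V} {p : Fin (n + 1) → V} :
    p ∈ walks pred a n v ↔
      p 0 = a ∧ (∀ t : Fin n, p t.castSucc ∈ pred t (p t.succ)) ∧ p (Fin.last n) = v := by
  induction n generalizing v with
  | zero =>
    have hp : p = (fun _ => a) ↔ p 0 = a := by simp [funext_iff, Fin.forall_fin_one]
    by_cases hv : v = a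
    · simp [walks, hv, hp]
    · simpa [walks, hv] using fun h h' => hv (h'.symm.trans h)
  | succ n ih =>
    induction p using Fin.snocCases with
    | _ q w =>
    simp only [walks, Finset.mem_biUnion, Finset.mem_image, Fin.snoc_inj, ih, Fin.forall_fin_succ',
      Fin.snoc_castSucc, Fin.snoc_last, Fin.succ_castSucc, Fin.succ_last, Fin.val_castSucc,
      Fin.val_last, Fin.snoc_apply_zero]
    constructor
    · rintro ⟨u, hu, q, ⟨h0, hstep, rfl⟩, rfl, rfl⟩
      exact ⟨h0, ⟨hstep, hu⟩, rfl⟩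
    · rintro ⟨h0, ⟨hstep, hu⟩, rfl⟩
      exact ⟨_, hu, q, ⟨h0, hstep, rfl⟩, rfl, rfl⟩

variable {R : Type*} [CommRing R]

/-- The generating function of `walks pred a n v`, a walk being weighted by the product of the
weights of the vertices it visits after its starting point. -/
def walkSum (pred : ℕ → V → Finset V) (w : V → R) (a : V) (n : ℕ) (v : V) : R :=
  ∑ p ∈ walks pred a n v, ∏ t : Fin n, w (p t.succ)

variable {pred pred' : ℕ → V → Finset V} {w : V → R} {a : V}

theorem walkSum_zero (v : V) : walkSum pred w a 0 v = if v = a then 1 else 0 := by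
  unfold walkSum walks
  split_ifs <;> simp

theorem walkSum_succ (n : ℕ) (v : V) :
    walkSum pred w a (n + 1) v = w v * ∑ u ∈ pred n v, walkSum pred w a n u := by
  have hdisj : (pred n v : Set V).PairwiseDisjoint fun u =>
      (walks pred a n u).image fun p => Fin.snoc (α := fun _ => V) p v := by
    intro u _ u' _ hne
    simp only [Function.onFun, Finset.disjoint_left, Finset.mem_image, mem_walks]
    rintro _ ⟨p, ⟨-, -, hp⟩, rfl⟩ ⟨p', ⟨-, -, hp'⟩, h⟩
    exact hne (by rw [← hp, ← hp', (Fin.snoc_inj.1 h).1])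
  unfold walkSum
  rw [walks, Finset.sum_biUnion hdisj, Finset.mul_sum]
  refine Finset.sum_congr rfl fun u _ => ?_
  rw [Finset.sum_image fun p _ q _ h => (Fin.snoc_inj.1 h).1, Finset.mul_sum]
  refine Finset.sum_congr rfl fun p _ => ?_
  simp only [Fin.prod_univ_castSucc, Fin.succ_castSucc, Fin.succ_last, Fin.snoc_castSucc,
    Fin.snoc_last, mul_comm]

theorem walkSum_congr {n : ℕ} (h : ∀ m < n, pred m = pred' m) (v : V) :
    walkSum pred w a n v = walkSum pred' w a n v := by
  induction n generalizing v with
  | zero => simp only [walkSum_zero]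
  | succ n ih =>
    rw [walkSum_succ, walkSum_succ, h n n.lt_succ_self]
    exact congrArg _ (Finset.sum_congr rfl fun u _ => ih (fun m hm => h m (by omega)) u)

theorem walkSum_one_eq_card (n : ℕ) (v : V) :
    walkSum pred (1 : V → R) a n v = (walks pred a n v).card := by
  simp [walkSum]

end Walks

section KarlinMcGregor

variable {ι α R : Type*} [Fintype ι] [LinearOrder ι] [LinearOrder α] [CommRing R]

/-- The strictly ordered predecessors at time `n` of a configuration `b` of walkers, walker `j`
having the predecessor sets `S j`. Walks for these are families of non-intersecting walks, up to
the order of the end configuration. -/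
def orderedPred (S : ι → ℕ → α → Finset α) (n : ℕ) (b : ι → α) : Finset (ι → α) :=
  open Classical in {b' ∈ Fintype.piFinset fun j => S j n (b j) | StrictMono b'}

variable {S : ι → ℕ → α → Finset α} {w : α → R} {n : ℕ} {a b b' : ι → α}

theorem mem_orderedPred : b' ∈ orderedPred S n b ↔ (∀ j, b' j ∈ S j n (b j)) ∧ StrictMono b' := by
  simp [orderedPred]

theorem strictMono_of_mem_walks {p : Fin (n + 1) → ι → α}
    (hp : p ∈ walks (orderedPred S) a n b) (hb : StrictMono b) (t : Fin (n + 1)) :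
    StrictMono (p t) := by
  obtain ⟨-, hstep, hlast⟩ := mem_walks.1 hp
  induction t using Fin.lastCases with
  | last => rwa [hlast]
  | cast t => exact (mem_orderedPred.1 (hstep t)).2

theorem det_ite_eq_of_strictMono (ha : StrictMono a) (hb : StrictMono b) :
    (Matrix.of fun j i => if b j = a i then (1 : R) else 0).det = if b = a then 1 else 0 := by
  split_ifs with hba
  · subst hba
    convert Matrix.det_one (n := ι) (R := R)
    ext i j
    simp [Matrix.one_apply, hb.injective.eq_iff]
  · suffices h : ∃ j, ∀ i, b j ≠ a i by
      obtain ⟨j, hj⟩ := h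
      exact Matrix.det_eq_zero_of_row_eq_zero j fun i => by simp [hj i]
    by_contra! h
    choose σ hσ using h
    have hσ_mono : StrictMono σ := fun i j hij =>
      ha.lt_iff_lt.1 (by rw [← hσ, ← hσ]; exact hb hij)
    refine hba (funext fun j => ?_)
    rw [hσ, le_antisymm hσ_mono.apply_le hσ_mono.le_apply]

theorem det_walkSum_succ (n : ℕ) (b : ι → α) :
    (Matrix.of fun j i => walkSum (S j) w (a i) (n + 1) (b j)).det =
      (∏ j, w (b j)) * ∑ b' ∈ Fintype.piFinset fun j => S j n (b j),
        (Matrix.of fun j i => walkSum (S j) w (a i) n (b' j)).det := by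
  let row (j : ι) (h : α) : ι → R := fun i => walkSum (S j) w (a i) n h
  have hrows : (Matrix.of fun j i => walkSum (S j) w (a i) (n + 1) (b j)) =
      fun j => w (b j) • ∑ h ∈ S j n (b j), row j h := by
    ext j i
    simp [walkSum_succ, row]
  rw [hrows]
  exact ((Matrix.detRowAlternating (R := R)).toMultilinearMap.map_smul_univ _ _).trans
    (congrArg _ (MultilinearMap.map_sum_finset _ _ _))

/-- Karlin–McGregor, Lindström–Gessel–Viennot: the invariant `Q` has to guarantee that walkers lose
their order only by colliding, and that colliding walkers have had the same possible pasts, so that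
two rows of the determinant agree. -/
theorem walkSum_orderedPred_eq_det (ha : StrictMono a) (Q : ℕ → Set (ι → α))
    (hQ : ∀ n, ∀ b ∈ Q (n + 1), StrictMono b → ∀ b', (∀ j, b' j ∈ S j n (b j)) →
      b' ∈ Q n ∧ (StrictMono b' ∨ ∃ i j, i ≠ j ∧ b' i = b' j ∧ ∀ m < n, S i m = S j m))
    (hb : StrictMono b) (hbQ : b ∈ Q n) :
    walkSum (orderedPred S) (fun b => ∏ j, w (b j)) a n b =
      (Matrix.of fun j i => walkSum (S j) w (a i) n (b j)).det := by
  induction n generalizing b with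
  | zero => simp only [walkSum_zero, det_ite_eq_of_strictMono ha hb]
  | succ n ih =>
    rw [walkSum_succ, det_walkSum_succ, orderedPred, Finset.sum_filter]
    refine congrArg _ (Finset.sum_congr rfl fun b' hb' => ?_)
    obtain ⟨hb'Q, hcollide⟩ := hQ n b hbQ hb b' (Fintype.mem_piFinset.1 hb')
    split_ifs with hb'_mono
    · exact ih hb'_mono hb'Q
    · obtain ⟨i, j, hij, hpos, hpast⟩ := hcollide.resolve_left hb'_mono
      refine (Matrix.det_zero_of_row_eq hij (funext fun l => ?_)).symm
      simp only [Matrix.of_apply, hpos, walkSum_congr hpast]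

end KarlinMcGregor

section LatticePaths

/-- The heights from which the height `h` can be reached by a single step. -/
def adjacentHeights (h : ℕ) : Finset ℕ := {h' ∈ Finset.range (h + 2) | h' = h + 1 ∨ h = h' + 1}

/-- The predecessor heights for lattice paths all of whose steps from time `T` on go up. -/
def climbFrom (T n h : ℕ) : Finset ℕ := {h' ∈ adjacentHeights h | T ≤ n → h = h' + 1}

theorem mem_adjacentHeights {h h' : ℕ} : h' ∈ adjacentHeights h ↔ h' = h + 1 ∨ h = h' + 1 := by
  simp only [adjacentHeights, Finset.mem_filter, Finset.mem_range]
  omega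

theorem mem_climbFrom {T n h h' : ℕ} :
    h' ∈ climbFrom T n h ↔ h' ∈ adjacentHeights h ∧ (T ≤ n → h = h' + 1) := by
  simp only [climbFrom, Finset.mem_filter]

theorem climbFrom_of_lt {T n : ℕ} (hn : n < T) : climbFrom T n = adjacentHeights := by
  ext h h'
  simp [mem_climbFrom, hn.not_ge]

variable {M : Type*} [AddCommMonoid M] (f : ℕ → M)

theorem sum_adjacentHeights_zero : ∑ h ∈ adjacentHeights 0, f h = f 1 := by
  have : adjacentHeights 0 = {1} := by ext; simp [mem_adjacentHeights]
  simp [this]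

theorem sum_adjacentHeights_succ (h : ℕ) :
    ∑ h' ∈ adjacentHeights (h + 1), f h' = f h + f (h + 2) := by
  have : adjacentHeights (h + 1) = {h, h + 2} := by
    ext
    simp only [mem_adjacentHeights, Finset.mem_insert, Finset.mem_singleton]
    omega
  rw [this, Finset.sum_pair (by omega)]

variable {R : Type*} [CommRing R]

theorem walkSum_eq_zero_of_lt {pred : ℕ → ℕ → Finset ℕ} {w : ℕ → R} {a n h : ℕ}
    (hpred : ∀ n h, pred n h ⊆ adjacentHeights h) (hh : a + n < h) : walkSum pred w a n h = 0 := by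
  induction n generalizing h with
  | zero => rw [walkSum_zero, if_neg (by omega)]
  | succ n ih =>
    rw [walkSum_succ, Finset.sum_eq_zero, mul_zero]
    intro h' hh'
    have := mem_adjacentHeights.1 (hpred n h hh')
    exact ih (by omega)

theorem climbFrom_subset_adjacentHeights (T n h : ℕ) : climbFrom T n h ⊆ adjacentHeights h :=
  Finset.filter_subset _ _

/-- The number of lattice paths of length `n` from height `a` to height `h` above the axis. -/
def pathCount (a n h : ℕ) : ℤ := walkSum (fun _ => adjacentHeights) 1 a n h

/-- The number of such paths all of whose steps from time `T` on go up. -/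
def climbCount (T a n h : ℕ) : ℤ := walkSum (climbFrom T) 1 a n h

theorem pathCount_succ_zero (a n : ℕ) : pathCount a (n + 1) 0 = pathCount a n 1 := by
  simp [pathCount, walkSum_succ, sum_adjacentHeights_zero]

theorem pathCount_succ_succ (a n h : ℕ) :
    pathCount a (n + 1) (h + 1) = pathCount a n h + pathCount a n (h + 2) := by
  simp [pathCount, walkSum_succ, sum_adjacentHeights_succ]

theorem climbCount_self (T a h : ℕ) : climbCount T a T h = pathCount a T h :=
  walkSum_congr (fun _ hm => climbFrom_of_lt hm) h

theorem climbCount_succ_zero {T n : ℕ} (hn : T ≤ n) (a : ℕ) : climbCount T a (n + 1) 0 = 0 := by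
  have : climbFrom T n 0 = ∅ := by ext; simp [mem_climbFrom, hn]
  simp [climbCount, walkSum_succ, this]

theorem climbCount_succ_succ {T n : ℕ} (hn : T ≤ n) (a h : ℕ) :
    climbCount T a (n + 1) (h + 1) = climbCount T a n h := by
  have : climbFrom T n (h + 1) = {h} := by
    ext
    simp only [mem_climbFrom, mem_adjacentHeights, Finset.mem_singleton]
    omega
  simp [climbCount, walkSum_succ, this]

theorem climbCount_add_add {T n : ℕ} (hn : T ≤ n) (a h s : ℕ) :
    climbCount T a (n + s) (h + s) = climbCount T a n h := by
  induction s with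
  | zero => rfl
  | succ s ih => rw [← add_assoc, ← add_assoc, climbCount_succ_succ (by omega), ih]

theorem climbCount_add_climbCount (a n h : ℕ) :
    climbCount n a (n + 1) h + climbCount n a (n + 1) (h + 2) = pathCount a (n + 1) h := by
  rcases h with _ | h
  · rw [climbCount_succ_zero le_rfl, climbCount_succ_succ le_rfl, climbCount_self,
      pathCount_succ_zero, zero_add]
  · simp only [climbCount_succ_succ le_rfl, climbCount_self, pathCount_succ_succ]

end LatticePaths

section Returns

/-- The weight marking the visits to the axis. -/
noncomputable def returnWeight (h : ℕ) : ℤ[X] := if h = 0 then X else 1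

/-- The generating polynomial, by number of returns, of the lattice paths of length `n` from height
`a` to height `h`. -/
noncomputable def returnPoly (a n h : ℕ) : ℤ[X] :=
  walkSum (fun _ => adjacentHeights) returnWeight a n h

/-- The sum `∑ j ≤ i, (X - 1) ^ (i - j) * returnPoly (2 * j) n h`: the generating polynomial for
paths with a geometric distribution of starting heights. -/
noncomputable def geomReturnPoly (i n h : ℕ) : ℤ[X] :=
  match i with
  | 0 => returnPoly 0 n h
  | i + 1 => returnPoly (2 * (i + 1)) n h + (X - 1) * geomReturnPoly i n h

theorem geomReturnPoly_succ_right (i n h : ℕ) :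
    geomReturnPoly i (n + 1) h =
      returnWeight h * ∑ h' ∈ adjacentHeights h, geomReturnPoly i n h' := by
  induction i with
  | zero => exact walkSum_succ n h
  | succ i ih =>
    simp only [geomReturnPoly, ih, Finset.sum_add_distrib, ← Finset.mul_sum, returnPoly,
      walkSum_succ]
    ring

theorem geomReturnPoly_succ_zero (i n : ℕ) :
    geomReturnPoly i (n + 1) 0 = X * geomReturnPoly i n 1 := by
  rw [geomReturnPoly_succ_right, sum_adjacentHeights_zero, returnWeight, if_pos rfl]

theorem geomReturnPoly_succ_succ (i n h : ℕ) :
    geomReturnPoly i (n + 1) (h + 1) = geomReturnPoly i n h + geomReturnPoly i n (h + 2) := by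
  rw [geomReturnPoly_succ_right, sum_adjacentHeights_succ, returnWeight, if_neg h.succ_ne_zero,
    one_mul]

theorem geomReturnPoly_eq_zero_of_lt {i n h : ℕ} (hh : 2 * i + n < h) :
    geomReturnPoly i n h = 0 := by
  have hzero (a : ℕ) (ha : a + n < h) : returnPoly a n h = 0 :=
    walkSum_eq_zero_of_lt (fun _ _ => subset_rfl) ha
  induction i with
  | zero => exact hzero _ hh
  | succ i ih => rw [geomReturnPoly, hzero _ hh, ih (by omega), mul_zero, zero_add]

/-- The geometric initial distribution is chosen so that this holds at `n = 0`; the return weight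
`X` at height `0` preserves it. -/
theorem geomReturnPoly_eq_add (i n h : ℕ) :
    geomReturnPoly i n h = C (pathCount (2 * i) n h) + (X - 1) * geomReturnPoly i n (h + 2) := by
  induction n generalizing h with
  | zero =>
    have hinit (a h : ℕ) : returnPoly a 0 h = C (pathCount a 0 h) := by
      simp [returnPoly, pathCount, walkSum_zero]
    induction i with
    | zero => simp [geomReturnPoly, hinit, pathCount, walkSum_zero]
    | succ i ih =>
      have hshift : pathCount (2 * (i + 1)) 0 (h + 2) = pathCount (2 * i) 0 h := by
        simp [pathCount, walkSum_zero, mul_add]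
      simp only [geomReturnPoly, hinit, hshift]
      linear_combination (X - 1) * ih
  | succ n ih =>
    rcases h with _ | h
    · rw [geomReturnPoly_succ_zero, geomReturnPoly_succ_succ, pathCount_succ_zero]
      linear_combination ih 1
    · rw [geomReturnPoly_succ_succ, geomReturnPoly_succ_succ _ _ (h + 2), pathCount_succ_succ,
        C_add]
      linear_combination ih h + ih (h + 2)

theorem coeff_zero_geomReturnPoly_add (i n h : ℕ) :
    (geomReturnPoly i n h).coeff 0 + (geomReturnPoly i n (h + 2)).coeff 0 =
      pathCount (2 * i) n h := by
  have := congrArg (coeff · 0) (geomReturnPoly_eq_add i n h)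
  simp only [sub_mul, one_mul, coeff_add, coeff_sub, coeff_C_zero, coeff_X_mul_zero] at this
  linarith

theorem coeff_succ_geomReturnPoly_add (i n e h : ℕ) :
    (geomReturnPoly i n h).coeff (e + 1) + (geomReturnPoly i n (h + 2)).coeff (e + 1) =
      (geomReturnPoly i n (h + 2)).coeff e := by
  have := congrArg (coeff · (e + 1)) (geomReturnPoly_eq_add i n h)
  simp only [sub_mul, one_mul, coeff_add, coeff_sub, coeff_C_succ, coeff_X_mul] at this
  linarith

theorem eq_of_add_eq_add {G : Type*} [Add G] [IsRightCancelAdd G] {f g : ℕ → G} {N k : ℕ}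
    (hk : 0 < k) (hlarge : ∀ h, N < h → f h = g h)
    (hadd : ∀ h, f h + f (h + k) = g h + g (h + k)) (h : ℕ) : f h = g h := by
  have hdown (m : ℕ) : ∀ h, N < h + m * k → f h = g h := by
    induction m with
    | zero => simpa using hlarge
    | succ m ih =>
      intro h hh
      have hnext := ih (h + k) (by linarith)
      exact add_right_cancel (hnext ▸ hadd h)
  exact hdown (N + 1) h (by nlinarith)

/-- In `h`, both sides vanish eventually and have equal sums of the values at `h` and `h + 2`. -/
theorem coeff_geomReturnPoly (i n e h : ℕ) :
    (geomReturnPoly i (n + e + 1) h).coeff e = climbCount n (2 * i) (n + 1) (h + e) := by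
  have hlarge (n e h : ℕ) (hh : 2 * i + n + e + 1 < h) :
      (geomReturnPoly i (n + e + 1) h).coeff e = climbCount n (2 * i) (n + 1) (h + e) := by
    rw [geomReturnPoly_eq_zero_of_lt (by omega), coeff_zero, climbCount,
      walkSum_eq_zero_of_lt (climbFrom_subset_adjacentHeights n) (by omega)]
  induction e generalizing n h with
  | zero =>
    refine eq_of_add_eq_add two_pos (hlarge n 0) (fun h => ?_) h
    exact (coeff_zero_geomReturnPoly_add i (n + 1) h).trans
      (climbCount_add_climbCount (2 * i) n h).symm
  | succ e ih =>
    refine eq_of_add_eq_add two_pos (hlarge n (e + 1)) (fun h => ?_) h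
    calc (geomReturnPoly i (n + (e + 1) + 1) h).coeff (e + 1) +
          (geomReturnPoly i (n + (e + 1) + 1) (h + 2)).coeff (e + 1)
      _ = (geomReturnPoly i (n + 1 + e + 1) (h + 2)).coeff e := by
        rw [coeff_succ_geomReturnPoly_add, add_right_comm n 1 e, add_assoc n e 1]
      _ = climbCount (n + 1) (2 * i) (n + 1 + 1) (h + (e + 1) + 1) := by
        rw [ih, show h + 2 + e = h + (e + 1) + 1 by ring]
      _ = pathCount (2 * i) (n + 1) (h + (e + 1)) := by
        rw [climbCount_succ_succ le_rfl, climbCount_self]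
      _ = climbCount n (2 * i) (n + 1) (h + (e + 1)) +
            climbCount n (2 * i) (n + 1) (h + 2 + (e + 1)) := by
        rw [← climbCount_add_climbCount, add_right_comm h 2]

end Returns

section Determinants

variable {R : Type*} [CommRing R]

theorem det_eq_of_forall_row_eq_add_smul_succ {n : ℕ} {A B : Matrix (Fin (n + 1)) (Fin (n + 1)) R}
    (c : R) (hlast : A (Fin.last n) = B (Fin.last n))
    (hrow : ∀ i : Fin n, A i.castSucc = B i.castSucc + c • A i.succ) : A.det = B.det := by
  rw [← Matrix.det_submatrix_equiv_self Fin.revPerm A,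
    ← Matrix.det_submatrix_equiv_self Fin.revPerm B]
  refine Matrix.det_eq_of_forall_row_eq_smul_add_pred (fun _ => c) (fun j => ?_) fun i j => ?_
  · simp [hlast]
  · simp [Fin.rev_succ, Fin.rev_castSucc, hrow]

theorem coeff_det_updateRow_map_C {n : Type*} [Fintype n] [DecidableEq n] (A : Matrix n n R)
    (i : n) (v : n → R[X]) (e : ℕ) :
    (((A.map C).updateRow i v).det).coeff e = (A.updateRow i fun j => (v j).coeff e).det := by
  rw [← Matrix.cramer_transpose_apply, ← Matrix.cramer_transpose_apply,
    Matrix.cramer_eq_adjugate_mulVec, Matrix.cramer_eq_adjugate_mulVec, ← Matrix.transpose_map,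
    ← RingHom.mapMatrix_apply, ← RingHom.map_adjugate]
  simp [Matrix.mulVec, dotProduct, coeff_C_mul]

theorem det_returnPoly_eq_det_geomReturnPoly (K n y : ℕ) :
    (Matrix.of fun j i : Fin (K + 1) => returnPoly (2 * i) n (y + 2 * j)).det =
      (Matrix.of fun j i : Fin (K + 1) => geomReturnPoly i n (y + 2 * j)).det := by
  refine (Matrix.det_eq_of_forall_col_eq_smul_add_pred (fun _ => X - 1) ?_ ?_).symm
  · simp [geomReturnPoly]
  · simp [geomReturnPoly]

theorem det_geomReturnPoly_eq_det_updateRow (K n y : ℕ) :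
    (Matrix.of fun j i : Fin (K + 1) => geomReturnPoly i n (y + 2 * j)).det =
      (((Matrix.of fun j i : Fin (K + 1) => pathCount (2 * i) n (y + 2 * j)).map C).updateRow
        (Fin.last K) fun i => geomReturnPoly i n (y + 2 * K)).det := by
  refine det_eq_of_forall_row_eq_add_smul_succ (X - 1) ?_ fun j => ?_
  · ext1 i; simp
  · ext1 i
    simp [geomReturnPoly_eq_add i n (y + 2 * j), mul_add, add_assoc]

theorem coeff_det_returnPoly (K T e y : ℕ) :
    (Matrix.of fun j i : Fin (K + 1) => returnPoly (2 * i) (T + e + 1) (y + 2 * j)).det.coeff e =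
      ((Matrix.of fun j i : Fin (K + 1) => pathCount (2 * i) (T + e + 1) (y + 2 * j)).updateRow
        (Fin.last K) fun i => climbCount T (2 * i) (T + e + 1) (y + 2 * K + 2 * e)).det := by
  have hclimb (a : ℕ) : climbCount T a (T + e + 1) (y + 2 * K + 2 * e) =
      climbCount T a (T + 1) (y + 2 * K + e) := by
    rw [← climbCount_add_add (n := T + 1) (by omega) a _ e]
    congr 1 <;> ring
  rw [det_returnPoly_eq_det_geomReturnPoly, det_geomReturnPoly_eq_det_updateRow,
    coeff_det_updateRow_map_C]
  simp only [coeff_geomReturnPoly, hclimb]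

end Determinants

section NonIntersectingPaths

theorem strictMono_or_collision {ι : Type*} [LinearOrder ι] {b b' : ι → ℕ} (hb : StrictMono b)
    (hparity : ∀ i j, b i % 2 = b j % 2) (hstep : ∀ j, b' j ∈ adjacentHeights (b j)) :
    StrictMono b' ∨ ∃ i j, i < j ∧ b' i = b' j := by
  simp only [mem_adjacentHeights] at hstep
  refine or_iff_not_imp_right.2 fun hne i j hij => ?_
  have : b' i ≠ b' j := fun h => hne ⟨i, j, hij, h⟩
  have := hb hij
  have := hparity i j
  have := hstep i
  have := hstep j
  omega

theorem mod_two_eq_of_mem_adjacentHeights {ι : Type*} {b b' : ι → ℕ}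
    (hparity : ∀ i j, b i % 2 = b j % 2) (hstep : ∀ j, b' j ∈ adjacentHeights (b j)) (i j : ι) :
    b' i % 2 = b' j % 2 := by
  have := hparity i j
  have := mem_adjacentHeights.1 (hstep i)
  have := mem_adjacentHeights.1 (hstep j)
  omega

variable {R : Type*} [CommRing R]

theorem walkSum_adjacentHeights_eq_det {ι : Type*} [Fintype ι] [LinearOrder ι] {w : ℕ → R}
    {n : ℕ} {a b : ι → ℕ} (ha : StrictMono a) (hb : StrictMono b)
    (hparity : ∀ i j, b i % 2 = b j % 2) :
    walkSum (orderedPred fun _ _ => adjacentHeights) (fun b => ∏ j, w (b j)) a n b =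
      (Matrix.of fun j i => walkSum (fun _ => adjacentHeights) w (a i) n (b j)).det := by
  refine walkSum_orderedPred_eq_det ha (fun _ => {b | ∀ i j, b i % 2 = b j % 2})
    (fun n b hparity hb b' hstep => ⟨mod_two_eq_of_mem_adjacentHeights hparity hstep, ?_⟩)
    hb hparity
  exact (strictMono_or_collision hb hparity hstep).imp_right
    fun ⟨i, j, hij, hpos⟩ => ⟨i, j, hij.ne, hpos, fun _ _ => rfl⟩

/-- The predecessor heights of `K + 1` paths of which the top one goes up from time `T` on. -/
def topClimbs (K T : ℕ) : Fin (K + 1) → ℕ → ℕ → Finset ℕ :=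
  Fin.snoc (fun _ _ => adjacentHeights) (climbFrom T)

variable {K T n : ℕ}

theorem topClimbs_subset_adjacentHeights (j : Fin (K + 1)) (h : ℕ) :
    topClimbs K T j n h ⊆ adjacentHeights h := by
  induction j using Fin.lastCases with
  | last => simpa [topClimbs] using climbFrom_subset_adjacentHeights T n h
  | cast j => simp [topClimbs]

theorem topClimbs_of_lt (hn : n < T) (j : Fin (K + 1)) : topClimbs K T j n = adjacentHeights := by
  induction j using Fin.lastCases with
  | last => simpa [topClimbs] using climbFrom_of_lt hn
  | cast j => simp [topClimbs]

/-- The gap below the climbing path, which shrinks by at most two per step backwards in time, rules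
out collisions with it after time `T`. -/
theorem walkSum_topClimbs_eq_det {w : ℕ → R} {a b : Fin (K + 1) → ℕ} (ha : StrictMono a)
    (hb : StrictMono b) (hparity : ∀ i j, b i % 2 = b j % 2)
    (hgap : ∀ i : Fin K, b i.castSucc + 2 * (n - T) ≤ b (Fin.last K)) :
    walkSum (orderedPred (topClimbs K T)) (fun b => ∏ j, w (b j)) a n b =
      (Matrix.of fun j i => walkSum (topClimbs K T j) w (a i) n (b j)).det := by
  refine walkSum_orderedPred_eq_det ha (fun n => {b | (∀ i j, b i % 2 = b j % 2) ∧
    ∀ i : Fin K, b i.castSucc + 2 * (n - T) ≤ b (Fin.last K)}) ?_ hb ⟨hparity, hgap⟩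
  rintro n b ⟨hparity, hgap⟩ hb b' hstep
  have hadj (j) : b' j ∈ adjacentHeights (b j) := topClimbs_subset_adjacentHeights j _ (hstep j)
  have hgap' (i : Fin K) : b' i.castSucc + 2 * (n - T) ≤ b' (Fin.last K) := by
    have := hb i.castSucc_lt_last
    have := hparity i.castSucc (Fin.last K)
    have := hgap i
    have := mem_adjacentHeights.1 (hadj i.castSucc)
    have := mem_adjacentHeights.1 (hadj (Fin.last K))
    omega
  refine ⟨⟨mod_two_eq_of_mem_adjacentHeights hparity hadj, hgap'⟩, ?_⟩
  refine (strictMono_or_collision hb hparity hadj).imp_right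
    fun ⟨i, j, hij, hpos⟩ => ⟨i, j, hij.ne, hpos, fun m hm => ?_⟩
  obtain ⟨i, rfl⟩ := Fin.exists_castSucc_eq.2 (hij.trans_le j.le_last).ne
  induction j using Fin.lastCases with
  | last =>
    have := hgap' i
    rw [topClimbs_of_lt (by omega), topClimbs_of_lt (by omega)]
  | cast j => simp [topClimbs]

theorem strictMono_snoc {α : Type*} [Preorder α] {f : Fin K → α} {a : α} :
    StrictMono (Fin.snoc (α := fun _ => α) f a) ↔ StrictMono f ∧ ∀ i, f i < a := by
  simp [StrictMono, Fin.forall_fin_succ', forall_and, (Fin.castSucc_lt_last _).not_gt, and_comm]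

theorem snoc_mem_walks_orderedPred {α : Type*} [LinearOrder α] {S : Fin K → ℕ → α → Finset α}
    {S' : ℕ → α → Finset α} {a b : Fin K → α} {a' b' : α} {f : Fin (n + 1) → Fin K → α}
    {g : Fin (n + 1) → α} (hb : ∀ i, b i < b') :
    (fun t => Fin.snoc (α := fun _ => α) (f t) (g t)) ∈
        walks (orderedPred (Fin.snoc S S')) (Fin.snoc a a') n (Fin.snoc b b') ↔
      f ∈ walks (orderedPred S) a n b ∧ g ∈ walks S' a' n b' ∧
        ∀ t i, f t i < g t := by
  simp only [mem_walks, mem_orderedPred, Fin.forall_fin_succ', Fin.snoc_castSucc, Fin.snoc_last,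
    strictMono_snoc, Fin.snoc_inj, forall_and]
  have hlast : f (Fin.last n) = b → g (Fin.last n) = b' →
      ∀ i, f (Fin.last n) i < g (Fin.last n) := by rintro h h'; rwa [h, h']
  tauto

end NonIntersectingPaths

section Watermelons

variable {m x y : ℕ}

theorem strictMono_add_two_mul (m y : ℕ) : StrictMono fun j : Fin m => y + 2 * (j : ℕ) :=
  fun i j hij => by
    have : (i : ℕ) < j := hij
    lia

theorem isWatermelon_iff_mem_walks {p : Fin m → Fin (x + 1) → ℕ} :
    IsWatermelon m x y p ↔ Function.swap p ∈ walks (orderedPred fun _ _ => adjacentHeights)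
      (fun j : Fin m => 2 * (j : ℕ)) x (fun j => y + 2 * j) := by
  constructor
  · rintro ⟨hstep, hends, hlt⟩
    refine mem_walks.2 ⟨funext fun j => (hends j).1, fun t => mem_orderedPred.2 ⟨fun j => ?_, ?_⟩,
      funext fun j => (hends j).2⟩
    · exact mem_adjacentHeights.2 (hstep j t t.2).symm
    · rcases m with _ | m
      · exact fun i => i.elim0
      · exact Fin.strictMono_iff_lt_succ.2 fun i => hlt i.castSucc (by simp) _
  · intro hp
    obtain ⟨h0, hstep, hlast⟩ := mem_walks.1 hp
    refine ⟨fun j t ht => ?_, fun j => ⟨congrFun h0 j, congrFun hlast j⟩, fun j hj t => ?_⟩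
    · exact (mem_adjacentHeights.1 ((mem_orderedPred.1 (hstep ⟨t, ht⟩)).1 j)).symm
    · exact strictMono_of_mem_walks hp (strictMono_add_two_mul m y) t
        (Fin.lt_def.2 j.val.lt_succ_self)

theorem prod_returnWeight {K : ℕ} {p : Fin (x + 1) → Fin (K + 1) → ℕ}
    (hp : ∀ t, StrictMono (p t)) :
    ∏ t : Fin x, ∏ j, returnWeight (p t.succ j) =
      X ^ Nat.card {t : Fin (x + 1) // 1 ≤ (t : ℕ) ∧ p t 0 = 0} := by
  have hbottom (t : Fin x) :
      ∏ j, returnWeight (p t.succ j) = X ^ (if p t.succ 0 = 0 then 1 else 0) := by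
    rw [Finset.prod_eq_single_of_mem 0 (Finset.mem_univ 0)]
    · unfold returnWeight
      split_ifs <;> simp
    · intro j _ hj
      have := hp t.succ (Fin.pos_of_ne_zero hj)
      exact if_neg (by omega)
  rw [Finset.prod_congr rfl fun t _ => hbottom t, Finset.prod_pow_eq_pow_sum,
    Nat.card_eq_fintype_card, Fintype.card_subtype, Finset.card_filter, Fin.sum_univ_succ]
  simp

theorem strictMono_two_mul (m : ℕ) : StrictMono fun j : Fin m => 2 * (j : ℕ) := by
  simpa using strictMono_add_two_mul m 0

theorem card_returns_eq_coeff_det (K x y e : ℕ) :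
    (Nat.card {p : Fin (K + 1) → Fin (x + 1) → ℕ // IsWatermelon (K + 1) x y p ∧
        Nat.card {t : Fin (x + 1) // 1 ≤ (t : ℕ) ∧ p 0 t = 0} = e} : ℤ) =
      (Matrix.of fun j i : Fin (K + 1) => returnPoly (2 * i) x (y + 2 * j)).det.coeff e := by
  have hend := strictMono_add_two_mul (K + 1) y
  unfold returnPoly
  rw [← walkSum_adjacentHeights_eq_det (strictMono_two_mul _) hend fun i j => by omega, walkSum,
    Finset.sum_congr rfl fun p hp => prod_returnWeight (strictMono_of_mem_walks hp hend),
    finsetSum_coeff]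
  simp only [coeff_X_pow]
  rw [Finset.sum_boole, ← Nat.card_eq_finsetCard]
  refine congrArg _ (Nat.card_congr ((Equiv.piComm fun _ _ => ℕ).subtypeEquiv fun p => ?_))
  rw [Finset.mem_filter, isWatermelon_iff_mem_walks, eq_comm (a := e)]
  rfl

end Watermelons

section TruncatedFamilies

variable {T s : ℕ}

/-- The path of length `T + s` that follows `q` and then takes `s` steps up. -/
def climbExtend (s : ℕ) (q : Fin (T + 1) → ℕ) (t : Fin (T + s + 1)) : ℕ :=
  q ⟨min t T, by omega⟩ + (t - T)

theorem climbExtend_of_le (q : Fin (T + 1) → ℕ) {t : ℕ} (ht : t ≤ T) :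
    climbExtend s q ⟨t, by omega⟩ = q ⟨t, by omega⟩ := by
  simp [climbExtend, ht]

theorem climbExtend_of_ge (q : Fin (T + 1) → ℕ) {t : ℕ} (hT : T ≤ t) (ht : t < T + s + 1) :
    climbExtend s q ⟨t, ht⟩ = q (Fin.last T) + (t - T) := by
  simp [climbExtend, hT, Fin.last]

theorem climbExtend_mem_walks_climbFrom {q : Fin (T + 1) → ℕ} {a b : ℕ} :
    climbExtend s q ∈ walks (climbFrom T) a (T + s) b ↔
      q ∈ walks (fun _ => adjacentHeights) a T (q (Fin.last T)) ∧ q (Fin.last T) + s = b := by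
  have hstep_lt {t : ℕ} (ht : t < T) :
      climbExtend s q ⟨t, by omega⟩ ∈ climbFrom T t (climbExtend s q ⟨t + 1, by omega⟩) ↔
        q ⟨t, by omega⟩ ∈ adjacentHeights (q ⟨t + 1, by omega⟩) := by
    rw [climbFrom_of_lt ht, climbExtend_of_le q ht.le, climbExtend_of_le q ht]
  have hstep_ge {t : ℕ} (hT : T ≤ t) (ht : t < T + s) :
      climbExtend s q ⟨t, by omega⟩ ∈ climbFrom T t (climbExtend s q ⟨t + 1, by omega⟩) := by
    rw [climbExtend_of_ge q hT, climbExtend_of_ge q (by omega), mem_climbFrom, mem_adjacentHeights]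
    omega
  have hzero : climbExtend s q 0 = q 0 := climbExtend_of_le q T.zero_le
  have hlast : climbExtend s q (Fin.last (T + s)) = q (Fin.last T) + s := by
    rw [Fin.last, climbExtend_of_ge q (by omega), Nat.add_sub_cancel_left]
  simp only [mem_walks, hzero, hlast]
  constructor
  · rintro ⟨h0, hstep, hb⟩
    exact ⟨⟨h0, fun t => (hstep_lt t.2).1 (hstep ⟨t, by omega⟩), trivial⟩, hb⟩
  · rintro ⟨⟨h0, hstep, -⟩, hb⟩
    exact ⟨h0, fun t => (lt_or_ge (t : ℕ) T).elim (fun ht => (hstep_lt ht).2 (hstep ⟨t, ht⟩))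
      fun ht => hstep_ge ht t.2, hb⟩

theorem climbExtend_eq_of_mem_walks {g : Fin (T + s + 1) → ℕ} {a b : ℕ}
    (hg : g ∈ walks (climbFrom T) a (T + s) b) :
    climbExtend s (fun t => g (t.castLE (by omega))) = g := by
  obtain ⟨-, hstep, -⟩ := mem_walks.1 hg
  have hclimb (t : ℕ) (hTt : T ≤ t) (ht : t < T + s + 1) :
      g ⟨t, ht⟩ = g ⟨T, by omega⟩ + (t - T) := by
    induction t, hTt using Nat.le_induction with
    | base => simp
    | succ t hTt ih =>
      have := (mem_climbFrom.1 (hstep ⟨t, by omega⟩)).2 hTt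
      have := ih (by omega)
      simp only [Fin.succ_mk, Fin.castSucc_mk] at *
      omega
  ext ⟨t, ht⟩
  rcases le_total t T with hle | hge
  · exact climbExtend_of_le _ hle
  · rw [climbExtend_of_ge _ hge, hclimb t hge ht]
    rfl

theorem lt_climbExtend_iff {f : Fin (T + s + 1) → ℕ} {q : Fin (T + 1) → ℕ}
    (hf : ∀ t : Fin (T + s), f t.castSucc ∈ adjacentHeights (f t.succ)) :
    (∀ t, f t < climbExtend s q t) ↔ ∀ t : Fin (T + 1), f (t.castLE (by omega)) < q t := by
  constructor
  · intro h t
    exact (h (t.castLE (by omega))).trans_eq (climbExtend_of_le q t.is_le)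
  · intro h ⟨t, ht⟩
    rcases le_total t T with hle | hge
    · rw [climbExtend_of_le q hle]
      exact h ⟨t, by omega⟩
    · rw [climbExtend_of_ge q hge]
      induction t, hge using Nat.le_induction with
      | base => simpa [Fin.last] using h (Fin.last T)
      | succ t hTt ih =>
        have := ih (by omega)
        have := mem_adjacentHeights.1 (hf ⟨t, by omega⟩)
        simp only [Fin.succ_mk, Fin.castSucc_mk] at this
        omega

/-- The families of the theorem for `K = k - 1` and `T = x - e - 1`: a watermelon configuration and
a path of length `T` above it that can reach height `y + 2 * K + 2 * e` in `e + 1` further steps. -/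
def truncatedFamilies (K T e y : ℕ) : Set ((Fin K → Fin (T + e + 1 + 1) → ℕ) × (Fin (T + 1) → ℕ)) :=
  {q | IsWatermelon K (T + e + 1) y q.1 ∧
    q.2 ∈ walks (fun _ => adjacentHeights) (2 * K) T (q.2 (Fin.last T)) ∧
    q.2 (Fin.last T) + (e + 1) = y + 2 * K + 2 * e ∧
    ∀ i t, q.1 i (t.castLE (by omega)) < q.2 t}

variable {K e y : ℕ}

/-- A truncated family as a single walk of `K + 1` paths, its top path being prolonged upwards. -/
def joinClimb (q : (Fin K → Fin (T + e + 1 + 1) → ℕ) × (Fin (T + 1) → ℕ))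
    (t : Fin (T + e + 1 + 1)) : Fin (K + 1) → ℕ :=
  Fin.snoc (fun i => q.1 i t) (climbExtend (e + 1) q.2 t)

theorem joinClimb_injective : (joinClimb (K := K) (T := T) (e := e)).Injective := by
  intro q q' h
  have hparts (t) := Fin.snoc_inj.1 (congrFun h t)
  refine Prod.ext (funext fun i => funext fun t => congrFun (hparts t).1 i) (funext fun t => ?_)
  rw [← climbExtend_of_le (s := e + 1) q.2 t.is_le, ← climbExtend_of_le (s := e + 1) q'.2 t.is_le]
  exact (hparts ⟨t, by omega⟩).2

/-- The walks of `K + 1` non-intersecting paths of which the top one goes up from time `T` on, with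
the endpoints that `joinClimb` produces. -/
def climbingWalks (K T e y : ℕ) : Finset (Fin (T + e + 1 + 1) → Fin (K + 1) → ℕ) :=
  walks (orderedPred (topClimbs K T)) (Fin.snoc (fun i => 2 * (i : ℕ)) (2 * K)) (T + e + 1)
    (Fin.snoc (fun i => y + 2 * (i : ℕ)) (y + 2 * K + 2 * e))

theorem joinClimb_mem_climbingWalks
    {q : (Fin K → Fin (T + e + 1 + 1) → ℕ) × (Fin (T + 1) → ℕ)} :
    joinClimb q ∈ climbingWalks K T e y ↔ q ∈ truncatedFamilies K T e y := by
  refine (snoc_mem_walks_orderedPred fun i => by omega).trans ?_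
  have hbelow (hq : IsWatermelon K (T + e + 1) y q.1) :
      (∀ t i, q.1 i t < climbExtend (e + 1) q.2 t) ↔
        ∀ i (t : Fin (T + 1)), q.1 i (t.castLE (by omega)) < q.2 t := by
    obtain ⟨-, hstep, -⟩ := mem_walks.1 (isWatermelon_iff_mem_walks.1 hq)
    rw [forall_comm]
    exact forall_congr' fun i => lt_climbExtend_iff (T := T) (s := e + 1) fun t =>
      (mem_orderedPred.1 (hstep t)).1 i
  rw [truncatedFamilies, Set.mem_ofPred_eq, ← and_assoc (b := _ = _),
    ← climbExtend_mem_walks_climbFrom]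
  exact (and_congr_left' isWatermelon_iff_mem_walks.symm).trans
    (and_congr_right fun hq => and_congr_right' (hbelow hq))

theorem exists_joinClimb_eq {p : Fin (T + e + 1 + 1) → Fin (K + 1) → ℕ}
    (hp : p ∈ climbingWalks K T e y) : ∃ q, joinClimb q = p := by
  have hsnoc : p = fun t => Fin.snoc (α := fun _ => ℕ) (fun i => p t i.castSucc)
      (p t (Fin.last K)) := funext fun t => (Fin.snoc_init_self (p t)).symm
  rw [hsnoc] at hp
  obtain ⟨-, htop, -⟩ := (snoc_mem_walks_orderedPred fun i => by omega).1 hp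
  refine ⟨(fun i t => p t i.castSucc, fun t => p (t.castLE (by omega)) (Fin.last K)), ?_⟩
  ext1 t
  have htop_eq := congrFun (climbExtend_eq_of_mem_walks (T := T) (s := e + 1) htop) t
  exact (congrArg (Fin.snoc _) htop_eq).trans (Fin.snoc_init_self (p t))

theorem card_truncatedFamilies_eq_card_climbingWalks :
    Nat.card (truncatedFamilies K T e y) = (climbingWalks K T e y).card := by
  have hpreimage : truncatedFamilies K T e y = joinClimb ⁻¹' (climbingWalks K T e y : Set _) :=
    Set.ext fun q => joinClimb_mem_climbingWalks.symm
  rw [hpreimage, Nat.card_preimage_of_injective joinClimb_injective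
    fun _ => exists_joinClimb_eq, Nat.card_coe_set_eq, Set.ncard_coe_finset]

theorem card_climbingWalks_eq_det :
    ((climbingWalks K T e y).card : ℤ) =
      ((Matrix.of fun j i : Fin (K + 1) => pathCount (2 * i) (T + e + 1) (y + 2 * j)).updateRow
        (Fin.last K) fun i => climbCount T (2 * i) (T + e + 1) (y + 2 * K + 2 * e)).det := by
  have hstart : (Fin.snoc (fun i => 2 * (i : ℕ)) (2 * K) : Fin (K + 1) → ℕ) =
      fun j : Fin (K + 1) => 2 * (j : ℕ) := by
    ext j
    induction j using Fin.lastCases <;> simp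
  have hdet := walkSum_topClimbs_eq_det (R := ℤ) (w := 1) (T := T) (n := T + e + 1)
    (a := fun j : Fin (K + 1) => 2 * (j : ℕ))
    (b := Fin.snoc (fun i => y + 2 * (i : ℕ)) (y + 2 * K + 2 * e))
    (strictMono_two_mul _) (strictMono_snoc.2 ⟨strictMono_add_two_mul K y, fun i => by omega⟩) ?_ ?_
  · rw [climbingWalks, hstart, ← walkSum_one_eq_card]
    refine Eq.trans ?_ (hdet.trans (congrArg _ ?_))
    · simp [← Pi.one_def]
    · ext j i
      induction j using Fin.lastCases <;> simp [topClimbs, pathCount, climbCount]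
  · suffices h : ∀ j, Fin.snoc (α := fun _ => ℕ) (fun i : Fin K => y + 2 * (i : ℕ))
        (y + 2 * K + 2 * e) j % 2 = y % 2 from fun i j => (h i).trans (h j).symm
    intro j
    induction j using Fin.lastCases with
    | last => rw [Fin.snoc_last]; omega
    | cast j => rw [Fin.snoc_castSucc]; omega
  · intro i
    simp only [Fin.snoc_castSucc, Fin.snoc_last]
    omega

theorem mem_truncatedFamilies_cast_iff {L : ℕ} (hL : L = T + 1)
    {q : (Fin K → Fin (T + e + 1 + 1) → ℕ) × (Fin L → ℕ)} :
    (q.1, fun t => q.2 (t.cast hL.symm)) ∈ truncatedFamilies K T e y ↔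
      IsWatermelon K (T + e + 1) y q.1 ∧
      (∀ (t : ℕ) (ht : t + 1 < L),
        q.2 ⟨t + 1, ht⟩ = q.2 ⟨t, by omega⟩ + 1 ∨ q.2 ⟨t, by omega⟩ = q.2 ⟨t + 1, ht⟩ + 1) ∧
      q.2 ⟨0, by omega⟩ = 2 * K ∧
      q.2 ⟨L - 1, by omega⟩ + 3 = y + 2 * (K + 1) + e ∧
      ∀ (_ : 2 ≤ K + 1) (t : Fin L), q.1 ⟨K - 1, by omega⟩ ⟨t, by omega⟩ < q.2 t := by
  subst hL
  have hsteps : (∀ t : Fin T, q.2 t.castSucc ∈ adjacentHeights (q.2 t.succ)) ↔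
      ∀ (t : ℕ) (ht : t + 1 < T + 1),
        q.2 ⟨t + 1, ht⟩ = q.2 ⟨t, by omega⟩ + 1 ∨ q.2 ⟨t, by omega⟩ = q.2 ⟨t + 1, ht⟩ + 1 := by
    simp only [mem_adjacentHeights, Fin.forall_iff, Nat.add_lt_add_iff_right]
    exact forall₂_congr fun _ _ => or_comm
  have hend : q.2 (Fin.last T) + (e + 1) = y + 2 * K + 2 * e ↔
      q.2 (Fin.last T) + 3 = y + 2 * (K + 1) + e := by omega
  have htop (hq : IsWatermelon K (T + e + 1) y q.1) :
      (∀ i (t : Fin (T + 1)), q.1 i (t.castLE (by omega)) < q.2 t) ↔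
        ∀ (_ : 2 ≤ K + 1) (t : Fin (T + 1)),
          q.1 ⟨K - 1, by omega⟩ (t.castLE (by omega)) < q.2 t := by
    refine ⟨fun h _ => h _, fun h i t => ?_⟩
    have hmono := strictMono_of_mem_walks (isWatermelon_iff_mem_walks.1 hq)
      (strictMono_add_two_mul K y)
    have hK := i.pos
    exact ((hmono _).monotone (Fin.le_def.2 (Nat.le_sub_one_of_lt i.2))).trans_lt (h (by omega) t)
  rw [truncatedFamilies, Set.mem_ofPred_eq, mem_walks]
  refine and_congr_right fun hq => ?_
  simp only [Fin.cast_eq_self, htop hq, hsteps, hend, and_true]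
  tauto

end TruncatedFamilies

end Watermelon

/-- Brak–Essam: watermelon configurations of `k` paths of length `x` and
deviation `y` whose bottom path has exactly `e` returns are equinumerous with
families where the lower `k−1` paths form a watermelon configuration of length
`x` and deviation `y` and the top path ends at `(x−e−1, y+2k+e−3)`. -/
theorem stmt14 (k x y e : ℕ) (hk : 1 ≤ k) (he : e + 1 ≤ x) :
    Nat.card {p : Fin k → Fin (x+1) → ℕ // IsWatermelon k x y p ∧
        Nat.card {t : Fin (x+1) // 1 ≤ (t : ℕ) ∧ p ⟨0, by omega⟩ t = 0} = e}
    = Nat.card {q : (Fin (k-1) → Fin (x+1) → ℕ) × (Fin (x-e) → ℕ) //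
        IsWatermelon (k-1) x y q.1 ∧
        (∀ (t : ℕ) (ht : t + 1 < x - e),
          q.2 ⟨t + 1, ht⟩ = q.2 ⟨t, by omega⟩ + 1 ∨
          q.2 ⟨t, by omega⟩ = q.2 ⟨t + 1, ht⟩ + 1) ∧
        q.2 ⟨0, by omega⟩ = 2 * (k - 1) ∧
        q.2 ⟨x - e - 1, by omega⟩ + 3 = y + 2 * k + e ∧
        (∀ (hk2 : 2 ≤ k) (t : Fin (x-e)),
          q.1 ⟨k - 2, by omega⟩ ⟨(t : ℕ), by have := t.isLt; omega⟩ < q.2 t)} := by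
  obtain ⟨K, rfl⟩ : ∃ K, k = K + 1 := ⟨k - 1, by omega⟩
  obtain ⟨T, rfl⟩ : ∃ T, x = T + e + 1 := ⟨x - e - 1, by omega⟩
  have hL : T + e + 1 - e = T + 1 := by omega
  let reindex := (Equiv.refl (Fin K → Fin (T + e + 1 + 1) → ℕ)).prodCongr
    ((finCongr hL).arrowCongr (Equiv.refl ℕ))
  refine Eq.trans ?_ (Nat.card_congr (reindex.subtypeEquiv fun q =>
    (Watermelon.mem_truncatedFamilies_cast_iff hL (y := y)).symm)).symm
  have hcard := calc
    (Nat.card {p : Fin (K + 1) → Fin (T + e + 1 + 1) → ℕ // IsWatermelon (K + 1) (T + e + 1) y p ∧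
        Nat.card {t : Fin (T + e + 1 + 1) // 1 ≤ (t : ℕ) ∧ p 0 t = 0} = e} : ℤ)
    _ = _ := Watermelon.card_returns_eq_coeff_det K (T + e + 1) y e
    _ = _ := Watermelon.coeff_det_returnPoly K T e y
    _ = _ := Watermelon.card_climbingWalks_eq_det.symm
    _ = Nat.card (Watermelon.truncatedFamilies K T e y) :=
      congrArg _ Watermelon.card_truncatedFamilies_eq_card_climbingWalks.symm
  exact_mod_cast hcard
end

section
/- Assume y ≥ 1, k ≥ 1, T j = y for all j ∈ Fin x (the boundary T = N^y E^x), and B j < y for all j ∈ Fin x (so that the Young diagram λ(T,B) has first row λ_1 = x). Then for all natural numbers h_0,…,h_k and u_1,…,u_{y−1}, the number of tuples P ∈ P^k(T,B) with h_i(P) = h_i for all 0 ≤ i ≤ k and u_s(P) = u_s for all 1 ≤ s ≤ y−1 equals the number of k-flagged semistandard Young tableaux of shape λ(T,B) whose weight μ satisfies μ_i + h_{i−1} = x for 1 ≤ i ≤ k+1 and μ_{k+1+s} = u_s for 1 ≤ s ≤ y−1 (and μ_i = 0 for all i > k+y). -/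
/-- A path `P` lies in `P(T,B)`: it is weakly increasing (monotone) and lies
weakly between the boundaries `B` and `T`. -/
def InP {x y : ℕ} (T B P : Fin x → Fin (y+1)) : Prop :=
  Monotone P ∧ ∀ j, B j ≤ P j ∧ P j ≤ T j

/-- A `k`-tuple of paths lies in `P^k(T,B)`: every path lies in `P(T,B)` and
each path lies weakly above the next one. -/
def InPk {x y k : ℕ} (T B : Fin x → Fin (y+1)) (P : Fin k → Fin x → Fin (y+1)) : Prop :=
  (∀ i, InP T B (P i)) ∧
  ∀ (i : Fin k) (hi : (i : ℕ) + 1 < k) (j : Fin x), P ⟨(i : ℕ) + 1, hi⟩ j ≤ P i j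

/-- The extended tuple, with the conventions `P_0 = T` and `P_{k+1} = B`. -/
def extP {x y k : ℕ} (T B : Fin x → Fin (y+1)) (P : Fin k → Fin x → Fin (y+1))
    (i : Fin (k+2)) : Fin x → Fin (y+1) :=
  if h0 : (i : ℕ) = 0 then T
  else if hk1 : (i : ℕ) = k + 1 then B
  else P ⟨(i : ℕ) - 1, by have := i.isLt; omega⟩

/-- `hstat T B P i` is the number of east steps shared by `P_i` and `P_{i+1}`. -/
noncomputable def hstat {x y k : ℕ} (T B : Fin x → Fin (y+1))
    (P : Fin k → Fin x → Fin (y+1)) (i : Fin (k+1)) : ℕ :=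
  Nat.card {j : Fin x // extP T B P i.castSucc j = extP T B P i.succ j}

/-- `ustat T B P s` (for `s : Fin (y-1)` representing `s+1 ∈ {1,…,y-1}`) is the
number of east steps at height `y-(s+1)` lying strictly between `T` and `B`
that are used by none of the paths of `P`. -/
noncomputable def ustat {x y k : ℕ} (T B : Fin x → Fin (y+1))
    (P : Fin k → Fin x → Fin (y+1)) (s : Fin (y-1)) : ℕ :=
  Nat.card {j : Fin x // (B j : ℕ) < y - ((s : ℕ) + 1) ∧ y - ((s : ℕ) + 1) < (T j : ℕ) ∧
      ∀ i : Fin k, (P i j : ℕ) ≠ y - ((s : ℕ) + 1)}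

/-- `lam B r` is the length of row `r+1` (rows numbered `1,…,y` from the top) of
the Young diagram `λ(T,B)` bounded by `T = N^y E^x` and `B`. -/
noncomputable def lam {x y : ℕ} (B : Fin x → Fin (y+1)) (r : Fin y) : ℕ :=
  Nat.card {j : Fin x // (B j : ℕ) ≤ y - ((r : ℕ) + 1)}

/-- A `k`-flagged semistandard Young tableau of shape `λ(T,B)`, encoded as a
function on the `y × x` grid: entries inside the diagram are positive, at most
`k + row`, weakly increasing along rows and strictly increasing down columns;
entries outside the diagram are normalized to `0`. -/
def IsFlaggedSSYT {x y : ℕ} (k : ℕ) (B : Fin x → Fin (y+1)) (S : Fin y → Fin x → ℕ) : Prop :=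
  (∀ (r : Fin y) (c : Fin x), (c : ℕ) < lam B r → 1 ≤ S r c ∧ S r c ≤ k + (r : ℕ) + 1) ∧
  (∀ (r : Fin y) (c c' : Fin x), c ≤ c' → (c' : ℕ) < lam B r → S r c ≤ S r c') ∧
  (∀ (r r' : Fin y) (c : Fin x), (r : ℕ) + 1 = (r' : ℕ) → (c : ℕ) < lam B r' → S r c < S r' c) ∧
  (∀ (r : Fin y) (c : Fin x), lam B r ≤ (c : ℕ) → S r c = 0)

/-- `wt B S i` is the number of entries of the tableau `S` equal to `i`
(the `i`-th component of the weight of `S`). -/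
noncomputable def wt {x y : ℕ} (B : Fin x → Fin (y+1)) (S : Fin y → Fin x → ℕ) (i : ℕ) : ℕ :=
  Nat.card {rc : Fin y × Fin x // ((rc.2 : ℕ) < lam B rc.1) ∧ S rc.1 rc.2 = i}

/-!
Tuples of paths are multichains `⊥ = μ₀ ≤ … ≤ μₖ₊₁ = λ(T,B)` of Young diagrams, and flagged tableaux
are chains of horizontal strips from `⊥` to `λ(T,B)` in which the strips after the first `k + 1`
avoid more and more of the top rows. In a multichain, give a cell of `μₜ₊₁ / μₜ` the variable `zₜ`
if it is the lowest one of its column, and the variable `uᵣ` of its row `r` otherwise: the exponent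
of `zₜ` is then `x - hₜ`, and that of `uᵣ` counts the columns in which some step of the chain passes
strictly over the height `y - (r + 1)`, which is the statistic of index `r + 1`. So both sides count
monomials in a `⊥`-row entry of a product of transfer matrices, namely `Vₘ(z₀) ⋯ Vₘ(zₖ)` for the
paths and `V₀(z₀) ⋯ V₀(zₖ) D₁ ⋯ Dₘ` for the tableaux, with `m = y - 1`. Here `Vₛ(z)` adds a skew
shape which is a horizontal strip from row `s` on, with the weights above, and `Dₛ` adds a
horizontal strip of cells of weight `uₛ₋₁` in the rows from `s` on. Reflecting every row of the
middle diagram in the interval allowed for it, as in the Bender–Knuth involution, proves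
`Dₜ₊₁ Vₜ₊₁(z) = Vₜ(z) Dₜ₊₁`. Moving `D₁ ⋯ Dₘ` to the left therefore turns each `V₀` into `Vₘ`, and
there these factors act trivially, as a strip on `⊥` that avoids the first row is empty.
-/

theorem card_subtype_and_congr {α β : Type*} {p r : α → Prop} {q s : β → Prop}
    (e : {a // p a} ≃ {b // q b}) (h : ∀ a : {a // p a}, r a ↔ s (e a)) :
    Nat.card {a // p a ∧ r a} = Nat.card {b // q b ∧ s b} :=
  Nat.card_congr <| (Equiv.subtypeSubtypeEquivSubtypeInter p r).symm.trans <|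
    (e.subtypeEquiv h).trans (Equiv.subtypeSubtypeEquivSubtypeInter q s)

section Walks

variable {A R : Type*}

/-- `c` is a walk from `a` to `b` of length `n` whose `t`-th step lies in the relation `S t`. -/
structure IsWalk {n : ℕ} (S : Fin n → A → A → Prop) (a b : A) (c : Fin (n + 1) → A) : Prop where
  source : c 0 = a
  target : c (Fin.last n) = b
  step : ∀ t, S t (c t.castSucc) (c t.succ)

theorem isWalk_cons {n : ℕ} {S : Fin (n + 1) → A → A → Prop} {a b a' : A} {c : Fin (n + 1) → A} :
    IsWalk S a b (Fin.cons a' c : Fin (n + 2) → A) ↔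
      a' = a ∧ IsWalk (fun t ↦ S t.succ) (c 0) b c ∧ S 0 a (c 0) := by
  constructor
  · rintro ⟨source, target, step⟩
    obtain rfl : a' = a := source
    exact ⟨rfl, ⟨rfl, target, fun t ↦ step t.succ⟩, step 0⟩
  · rintro ⟨rfl, ⟨-, target, step⟩, first⟩
    exact ⟨rfl, target, Fin.cases first step⟩

variable [Fintype A] [CommSemiring R]

theorem sum_fin_succ_fun {n : ℕ} (F : (Fin (n + 1) → A) → R) :
    ∑ c, F c = ∑ c : Fin n → A, ∑ a : A, F (Fin.cons a c) := by
  rw [← (Fin.consEquiv fun _ ↦ A).sum_comp, Fintype.sum_prod_type_right]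
  rfl

variable [DecidableEq A]

open Classical in
theorem prod_ofFn_ite_apply {n : ℕ} (S : Fin n → A → A → Prop) (w : Fin n → A → A → R)
    (a b : A) :
    (List.ofFn fun t ↦ (Matrix.of fun a b ↦ if S t a b then w t a b else 0)).prod a b =
      ∑ c : Fin (n + 1) → A with IsWalk S a b c, ∏ t, w t (c t.castSucc) (c t.succ) := by
  rw [Finset.sum_filter]
  induction n generalizing a with
  | zero =>
    have walk_iff (a' : A) (c : Fin 0 → A) :
        IsWalk S a b (Fin.cons a' c : Fin 1 → A) ↔ a' = a ∧ a = b :=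
      ⟨fun h ↦ ⟨h.source, h.source.symm.trans h.target⟩, fun h ↦ ⟨h.1, h.1.trans h.2, nofun⟩⟩
    rw [sum_fin_succ_fun]
    simp [walk_iff, ite_and, Matrix.one_apply]
  | succ n ih =>
    rw [List.ofFn_succ, List.prod_cons, Matrix.mul_apply, sum_fin_succ_fun]
    simp_rw [ih, isWalk_cons, Fin.prod_univ_succ, Finset.mul_sum]
    rw [Finset.sum_comm]
    refine Finset.sum_congr rfl fun c _ ↦ ?_
    rw [Finset.sum_eq_single (c 0)]
    · simp [ite_and]
    · intro j _ hj
      rw [if_neg fun h ↦ hj h.source.symm, mul_zero]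
    · simp

theorem mul_apply_of_row_eq_one {M N : Matrix A A R} {a : A}
    (hM : ∀ b, M a b = (1 : Matrix A A R) a b) (b : A) : (M * N) a b = N a b := by
  simp [Matrix.mul_apply, hM, Matrix.one_apply]

theorem prod_row_eq_one {l : List (Matrix A A R)} {a : A}
    (hl : ∀ M ∈ l, ∀ b, M a b = (1 : Matrix A A R) a b) (b : A) :
    l.prod a b = (1 : Matrix A A R) a b := by
  induction l with
  | nil => rfl
  | cons M l ih =>
    rw [List.prod_cons, mul_apply_of_row_eq_one (hl M List.mem_cons_self)]
    exact ih fun N hN ↦ hl N (List.mem_cons_of_mem M hN)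

end Walks

section Monomials

open Finset

variable {α β σ : Type*} {s : Finset α} {t : Finset β} {f : α → σ →₀ ℕ} {g : β → σ →₀ ℕ}

open MvPolynomial in
theorem map_eq_map_of_sum_monomial_eq
    (h : ∑ a ∈ s, monomial (f a) (1 : ℕ) = ∑ b ∈ t, monomial (g b) 1) :
    s.val.map f = t.val.map g := by
  classical
  ext d
  have coeff_eq := congrArg (coeff d) h
  simpa [coeff_sum, coeff_monomial, Finset.sum_boole, Multiset.count_map, Finset.card_def, eq_comm]
    using coeff_eq

theorem card_filter_comp_eq_of_map_eq_map (h : s.val.map f = t.val.map g) (Q : (σ →₀ ℕ) → Prop)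
    [DecidablePred Q] : #{a ∈ s | Q (f a)} = #{b ∈ t | Q (g b)} := by
  simpa [Multiset.countP_map, Finset.card_def] using congrArg (Multiset.countP Q) h

end Monomials

section Rows

open Finset

variable {L μ ν κ l : YoungDiagram}

theorem rowLen_le_rowLen_iff {r s : ℕ} :
    μ.rowLen r ≤ ν.rowLen s ↔ ∀ j, (r, j) ∈ μ → (s, j) ∈ ν := by
  simp only [YoungDiagram.mem_iff_lt_rowLen]
  exact ⟨fun h _ hj ↦ hj.trans_le h, le_of_forall_lt⟩

theorem le_iff_rowLen_le : μ ≤ ν ↔ ∀ r, μ.rowLen r ≤ ν.rowLen r := by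
  simp only [rowLen_le_rowLen_iff]
  exact ⟨fun h r j hj ↦ h hj, fun h c hc ↦ h c.1 c.2 hc⟩

theorem eq_of_rowLen_eq (h : ∀ r, μ.rowLen r = ν.rowLen r) : μ = ν :=
  le_antisymm (le_iff_rowLen_le.2 fun r ↦ (h r).le) (le_iff_rowLen_le.2 fun r ↦ (h r).ge)

/-- The subdiagram of `L` with row lengths `f 0 ≥ f 1 ≥ …`. The condition on a cell runs over all
rows above it, so that a diagram results even when `f` is not antitone. -/
def diagramOfRows (L : YoungDiagram) (f : ℕ → ℕ) : YoungDiagram where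
  cells := {c ∈ L.cells | ∀ r ≤ c.1, c.2 < f r}
  isLowerSet := by
    rintro ⟨r, j⟩ ⟨r', j'⟩ ⟨hr, hj⟩ hc
    simp only [coe_filter, Set.mem_ofPred_eq, YoungDiagram.mem_cells] at hc ⊢
    exact ⟨L.up_left_mem hr hj hc.1, fun i hi ↦ hj.trans_lt (hc.2 i (hi.trans hr))⟩

theorem diagramOfRows_le (L : YoungDiagram) (f : ℕ → ℕ) : diagramOfRows L f ≤ L :=
  filter_subset _ L.cells

theorem rowLen_diagramOfRows {f : ℕ → ℕ} (hf : Antitone f) (hfL : ∀ r, f r ≤ L.rowLen r) (r : ℕ) :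
    (diagramOfRows L f).rowLen r = f r := by
  refine eq_of_forall_lt_iff fun j ↦ ?_
  rw [← YoungDiagram.mem_iff_lt_rowLen, ← YoungDiagram.mem_cells]
  simp only [diagramOfRows, mem_filter, YoungDiagram.mem_cells, YoungDiagram.mem_iff_lt_rowLen]
  exact ⟨fun h ↦ h.2 r le_rfl, fun h ↦ ⟨h.trans_le (hfL r), fun i hi ↦ h.trans_le (hf hi)⟩⟩

theorem rowLen_bot (r : ℕ) : (⊥ : YoungDiagram).rowLen r = 0 :=
  Nat.eq_zero_of_not_pos fun h ↦ YoungDiagram.notMem_bot _ (YoungDiagram.mem_iff_lt_rowLen.2 h)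

theorem exists_rowLen_eq_zero (l : YoungDiagram) : ∃ N, l.rowLen N = 0 := by
  refine ⟨l.colLen 0, ?_⟩
  by_contra! h
  have : (l.colLen 0, 0) ∈ l := YoungDiagram.mem_iff_lt_rowLen.2 (Nat.pos_of_ne_zero h)
  exact lt_irrefl _ (YoungDiagram.mem_iff_lt_colLen.1 this)

theorem rowLen_eq_zero_of_le {N r : ℕ} (hN : l.rowLen N = 0) (hr : N ≤ r) : l.rowLen r = 0 :=
  Nat.eq_zero_of_le_zero (hN ▸ l.rowLen_anti N r hr)

theorem prod_cells_sdiff_cells {M : Type*} [CommMonoid M] {N : ℕ} (hN : l.rowLen N = 0)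
    (f : ℕ × ℕ → M) :
    ∏ c ∈ l.cells \ κ.cells, f c =
      ∏ r ∈ range N, ∏ j ∈ Ico (κ.rowLen r) (l.rowLen r), f (r, j) := by
  refine prod_finset_product _ _ _ fun ⟨r, j⟩ ↦ ?_
  have row_lt (hj : j < l.rowLen r) : r < N := by
    by_contra! h
    rw [rowLen_eq_zero_of_le hN h] at hj
    exact Nat.not_lt_zero j hj
  simp only [mem_sdiff, YoungDiagram.mem_cells, mem_range, mem_Ico,
    YoungDiagram.mem_iff_lt_rowLen, not_lt]
  exact ⟨fun h ↦ ⟨row_lt h.1, h.2, h.1⟩, fun h ↦ ⟨h.2.2, h.2.1⟩⟩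

noncomputable instance instFintypeIicYoungDiagram (L : YoungDiagram) : Fintype (Set.Iic L) :=
  Fintype.ofInjective
    (fun μ ↦ (⟨μ.1.cells, mem_powerset.2 μ.2⟩ : L.cells.powerset)) fun _ _ h ↦
      Subtype.ext (YoungDiagram.ext (congrArg Subtype.val h))

end Rows

section Strips

open Finset

variable {s : ℕ} {κ l : YoungDiagram}

/-- The skew shape `l / κ` is a horizontal strip without cells in its first `s` rows. -/
structure IsHorizontalStrip (s : ℕ) (κ l : YoungDiagram) : Prop where
  le : κ ≤ l
  rowLen_eq : ∀ r < s, l.rowLen r = κ.rowLen r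
  rowLen_succ_le : ∀ r, l.rowLen (r + 1) ≤ κ.rowLen r

/-- The rows `s, s + 1, …` of the skew shape `l / κ` form a horizontal strip; its first `s` rows are
arbitrary. -/
structure IsHorizontalStripFrom (s : ℕ) (κ l : YoungDiagram) : Prop where
  le : κ ≤ l
  rowLen_succ_le : ∀ r, s ≤ r → l.rowLen (r + 1) ≤ κ.rowLen r

theorem isHorizontalStrip_zero : IsHorizontalStrip 0 = IsHorizontalStripFrom 0 := by
  ext κ l
  exact ⟨fun h ↦ ⟨h.le, fun r _ ↦ h.rowLen_succ_le r⟩,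
    fun h ↦ ⟨h.le, nofun, fun r ↦ h.rowLen_succ_le r r.zero_le⟩⟩

theorem isHorizontalStripFrom_of_rowLen_eq_zero (h : κ ≤ l) (hl : l.rowLen (s + 1) = 0) :
    IsHorizontalStripFrom s κ l :=
  ⟨h, fun r hr ↦ by simp [rowLen_eq_zero_of_le hl (Nat.succ_le_succ hr)]⟩

theorem eq_bot_of_isHorizontalStrip_bot (h : IsHorizontalStrip (s + 1) ⊥ l) : l = ⊥ := by
  have first_row : l.rowLen 0 = 0 := by rw [h.rowLen_eq 0 s.succ_pos, rowLen_bot]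
  refine eq_of_rowLen_eq fun r ↦ ?_
  rw [rowLen_eq_zero_of_le first_row r.zero_le, rowLen_bot]

/-- The label of a cell of a skew shape with outer shape `l`: `z` for a cell at the bottom of its
column, and `u r` for any other cell of row `r`. -/
def columnLabel {σ : Type*} (z : σ) (u : ℕ → σ) (l : YoungDiagram) (c : ℕ × ℕ) : σ :=
  if (c.1 + 1, c.2) ∈ l then u c.1 else z

variable {R : Type*} [CommSemiring R]

theorem prod_row_columnLabel (z : R) (u : ℕ → R) {r : ℕ} (h : κ.rowLen r ≤ l.rowLen r) :
    ∏ j ∈ Ico (κ.rowLen r) (l.rowLen r), columnLabel z u l (r, j) =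
      u r ^ (max (κ.rowLen r) (l.rowLen (r + 1)) - κ.rowLen r) *
        z ^ (l.rowLen r - max (κ.rowLen r) (l.rowLen (r + 1))) := by
  have hmax : max (κ.rowLen r) (l.rowLen (r + 1)) ≤ l.rowLen r :=
    max_le h (l.rowLen_anti r (r + 1) r.le_succ)
  rw [← prod_Ico_consecutive _ (le_max_left _ _) hmax]
  congr 1 <;> rw [← Nat.card_Ico, ← prod_const] <;> refine prod_congr rfl fun j hj ↦ ?_
  · simp only [columnLabel, YoungDiagram.mem_iff_lt_rowLen]
    exact if_pos (by grind)
  · simp only [columnLabel, YoungDiagram.mem_iff_lt_rowLen]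
    exact if_neg (by grind)

variable {N : ℕ} (hN : l.rowLen N = 0)

include hN

theorem IsHorizontalStrip.prod_const (h : IsHorizontalStrip s κ l) (hs : s ≤ N) (w : R) :
    ∏ _c ∈ l.cells \ κ.cells, w = w ^ ∑ r ∈ Ico s N, (l.rowLen r - κ.rowLen r) := by
  rw [prod_cells_sdiff_cells hN, ← prod_range_mul_prod_Ico _ hs, ← prod_pow_eq_pow_sum]
  simp only [Finset.prod_const, Nat.card_Ico]
  rw [prod_eq_one fun r hr ↦ ?_, one_mul]
  rw [h.rowLen_eq r (mem_range.1 hr), Nat.sub_self, pow_zero]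

theorem IsHorizontalStripFrom.prod_columnLabel (h : IsHorizontalStripFrom s κ l) (hs : s ≤ N)
    (z : R) (u : ℕ → R) :
    ∏ c ∈ l.cells \ κ.cells, columnLabel z u l c =
      (∏ r ∈ range s, ∏ j ∈ Ico (κ.rowLen r) (l.rowLen r), columnLabel z u l (r, j)) *
        z ^ ∑ r ∈ Ico s N, (l.rowLen r - κ.rowLen r) := by
  rw [prod_cells_sdiff_cells hN, ← prod_range_mul_prod_Ico _ hs, ← prod_pow_eq_pow_sum]
  congr 1
  refine prod_congr rfl fun r hr ↦ ?_
  rw [prod_row_columnLabel z u (le_iff_rowLen_le.1 h.le r),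
    max_eq_left (h.rowLen_succ_le r (mem_Ico.1 hr).1), Nat.sub_self, pow_zero, one_mul]

end Strips

section Toggle

open Finset

variable {t : ℕ} {κ l ρ ν : YoungDiagram}

/-- The bounds on the rows below row `t` of a diagram `ρ` between `κ` and `l` under which `ρ / κ`
and `l / ρ` are both horizontal strips there. -/
def Interlaces (t : ℕ) (κ l ρ : YoungDiagram) : Prop :=
  ∀ r, t < r → max (κ.rowLen r) (l.rowLen (r + 1)) ≤ ρ.rowLen r ∧
    ρ.rowLen r ≤ min (l.rowLen r) (κ.rowLen (r - 1))

theorem isHorizontalStrip_and_isHorizontalStripFrom_iff :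
    IsHorizontalStrip (t + 1) κ ρ ∧ IsHorizontalStripFrom (t + 1) ρ l ↔
      κ ≤ l ∧ (∀ r ≤ t, ρ.rowLen r = κ.rowLen r) ∧ Interlaces t κ l ρ := by
  constructor
  · rintro ⟨⟨hκρ, hrow, hstrip⟩, hρl, hfrom⟩
    exact ⟨hκρ.trans hρl, fun r hr ↦ hrow r (Nat.lt_succ_of_le hr), fun
      | r + 1, hr => ⟨max_le (le_iff_rowLen_le.1 hκρ _) (hfrom _ hr),
        le_min (le_iff_rowLen_le.1 hρl _) (hstrip r)⟩⟩
  · rintro ⟨hκl, hrow, hρ⟩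
    have hκl := le_iff_rowLen_le.1 hκl
    have hκ (r) := κ.rowLen_anti r (r + 1) r.le_succ
    unfold Interlaces at hρ
    refine ⟨⟨le_iff_rowLen_le.2 ?_, ?_, ?_⟩, le_iff_rowLen_le.2 ?_, ?_⟩ <;> intro r <;>
      grind

theorem isHorizontalStripFrom_and_isHorizontalStrip_iff :
    IsHorizontalStripFrom t κ ρ ∧ IsHorizontalStrip (t + 1) ρ l ↔
      κ ≤ l ∧ (∀ r ≤ t, ρ.rowLen r = l.rowLen r) ∧ Interlaces t κ l ρ := by
  constructor
  · rintro ⟨⟨hκρ, hfrom⟩, hρl, hrow, hstrip⟩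
    exact ⟨hκρ.trans hρl, fun r hr ↦ (hrow r (Nat.lt_succ_of_le hr)).symm, fun
      | r + 1, hr => ⟨max_le (le_iff_rowLen_le.1 hκρ _) (hstrip _),
        le_min (le_iff_rowLen_le.1 hρl _) (hfrom r (Nat.le_of_lt_succ hr))⟩⟩
  · rintro ⟨hκl, hrow, hρ⟩
    have hκl := le_iff_rowLen_le.1 hκl
    have hl (r) := l.rowLen_anti r (r + 1) r.le_succ
    unfold Interlaces at hρ
    refine ⟨⟨le_iff_rowLen_le.2 ?_, ?_⟩, le_iff_rowLen_le.2 ?_, ?_, ?_⟩ <;> intro r <;>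
      grind

/-- The diagram which agrees with `ν` in the rows `0, …, t`, and in every lower row is the
reflection of `ρ` in the middle of the interval allowed by `Interlaces t κ l`. -/
def toggle (t : ℕ) (κ l ν ρ : YoungDiagram) : YoungDiagram :=
  diagramOfRows l fun r ↦
    if r ≤ t then ν.rowLen r
    else max (κ.rowLen r) (l.rowLen (r + 1)) + min (l.rowLen r) (κ.rowLen (r - 1)) - ρ.rowLen r

theorem toggle_le : toggle t κ l ν ρ ≤ l := diagramOfRows_le l _

section

variable (hκν : κ ≤ ν) (hνl : ν ≤ l) (hρ : Interlaces t κ l ρ)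

include hκν hνl hρ

theorem rowLen_toggle (r : ℕ) :
    (toggle t κ l ν ρ).rowLen r =
      if r ≤ t then ν.rowLen r
      else max (κ.rowLen r) (l.rowLen (r + 1)) + min (l.rowLen r) (κ.rowLen (r - 1)) -
        ρ.rowLen r := by
  have hκν := le_iff_rowLen_le.1 hκν
  have hνl := le_iff_rowLen_le.1 hνl
  apply rowLen_diagramOfRows
  · refine antitone_nat_of_succ_le fun r ↦ ?_
    have := ν.rowLen_anti r (r + 1) r.le_succ
    grind [Interlaces]
  · grind [Interlaces]

theorem rowLen_toggle_of_le {r : ℕ} (hr : r ≤ t) : (toggle t κ l ν ρ).rowLen r = ν.rowLen r := by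
  rw [rowLen_toggle hκν hνl hρ, if_pos hr]

theorem rowLen_add_rowLen_toggle {r : ℕ} (hr : t < r) :
    ρ.rowLen r + (toggle t κ l ν ρ).rowLen r =
      max (κ.rowLen r) (l.rowLen (r + 1)) + min (l.rowLen r) (κ.rowLen (r - 1)) := by
  have := hρ r hr
  rw [rowLen_toggle hκν hνl hρ, if_neg hr.not_ge]
  omega

theorem interlaces_toggle : Interlaces t κ l (toggle t κ l ν ρ) := by
  intro r hr
  have := hρ r hr
  have := rowLen_add_rowLen_toggle hκν hνl hρ hr
  omega

theorem toggle_toggle {ν' : YoungDiagram} (hκν' : κ ≤ ν') (hν'l : ν' ≤ l)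
    (hρν' : ∀ r ≤ t, ρ.rowLen r = ν'.rowLen r) :
    toggle t κ l ν' (toggle t κ l ν ρ) = ρ := by
  have interlaced := interlaces_toggle hκν hνl hρ
  refine eq_of_rowLen_eq fun r ↦ ?_
  obtain hr | hr := le_or_gt r t
  · rw [rowLen_toggle_of_le hκν' hν'l interlaced hr, hρν' r hr]
  · have := rowLen_add_rowLen_toggle hκν hνl hρ hr
    have := rowLen_add_rowLen_toggle hκν' hν'l interlaced hr
    omega

end

end Toggle

section Commutation

open Finset

variable {t : ℕ} {κ l ρ ρ' : YoungDiagram}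

theorem sum_rowLen_add_sum_rowLen {N : ℕ} (hl : l.rowLen N = 0) (hN : t < N)
    (h : ∀ r, t < r → ρ.rowLen r + ρ'.rowLen r =
      max (κ.rowLen r) (l.rowLen (r + 1)) + min (l.rowLen r) (κ.rowLen (r - 1))) :
    ∑ r ∈ Ico (t + 1) N, ρ.rowLen r + ∑ r ∈ Ico (t + 1) N, ρ'.rowLen r +
        max (κ.rowLen t) (l.rowLen (t + 1)) =
      ∑ r ∈ Ico (t + 1) N, κ.rowLen r + ∑ r ∈ Ico (t + 1) N, l.rowLen r + κ.rowLen t := by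
  have telescope : ∀ n, t + 1 ≤ n →
      ∑ r ∈ Ico (t + 1) n, ρ.rowLen r + ∑ r ∈ Ico (t + 1) n, ρ'.rowLen r +
          max (κ.rowLen t) (l.rowLen (t + 1)) + κ.rowLen (n - 1) =
        ∑ r ∈ Ico (t + 1) n, κ.rowLen r + ∑ r ∈ Ico (t + 1) n, l.rowLen r + κ.rowLen t +
          max (κ.rowLen (n - 1)) (l.rowLen n) := by
    refine Nat.le_induction (by simp; omega) fun n hn ih ↦ ?_
    have := h n hn
    simp only [sum_Ico_succ_top hn, Nat.add_sub_cancel]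
    omega
  have := telescope N hN
  rw [hl, max_eq_left (Nat.zero_le _)] at this
  omega

theorem sum_rowLen_le (h : κ ≤ l) (s : Finset ℕ) :
    ∑ r ∈ s, κ.rowLen r ≤ ∑ r ∈ s, l.rowLen r :=
  sum_le_sum fun r _ ↦ le_iff_rowLen_le.1 h r

theorem sum_rowLen_sub (h : κ ≤ l) (s : Finset ℕ) :
    ∑ r ∈ s, (l.rowLen r - κ.rowLen r) = ∑ r ∈ s, l.rowLen r - ∑ r ∈ s, κ.rowLen r :=
  sum_tsub_distrib s fun r _ ↦ le_iff_rowLen_le.1 h r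

variable {R : Type*} [CommSemiring R]

theorem prod_toggle_weight (z : R) (u : ℕ → R)
    (hκρ : IsHorizontalStrip (t + 1) κ ρ) (hρl : IsHorizontalStripFrom (t + 1) ρ l)
    (hκρ' : IsHorizontalStripFrom t κ ρ') (hρ'l : IsHorizontalStrip (t + 1) ρ' l)
    (h : ∀ r, t < r → ρ.rowLen r + ρ'.rowLen r =
      max (κ.rowLen r) (l.rowLen (r + 1)) + min (l.rowLen r) (κ.rowLen (r - 1))) :
    (∏ _c ∈ ρ.cells \ κ.cells, u t) * ∏ c ∈ l.cells \ ρ.cells, columnLabel z u l c =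
      (∏ c ∈ ρ'.cells \ κ.cells, columnLabel z u ρ' c) * ∏ _c ∈ l.cells \ ρ'.cells, u t := by
  obtain ⟨M, hM⟩ := exists_rowLen_eq_zero l
  obtain ⟨N, htN, hlN⟩ : ∃ N, t < N ∧ l.rowLen N = 0 :=
    ⟨t + 1 + M, by omega, rowLen_eq_zero_of_le hM (by omega)⟩
  have hρN : ρ.rowLen N = 0 := Nat.eq_zero_of_le_zero (hlN ▸ le_iff_rowLen_le.1 hρl.le N)
  have hρ'N : ρ'.rowLen N = 0 := Nat.eq_zero_of_le_zero (hlN ▸ le_iff_rowLen_le.1 hρ'l.le N)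
  have upper_rows : ∀ r ∈ range t,
      ∏ j ∈ Ico (ρ.rowLen r) (l.rowLen r), columnLabel z u l (r, j) =
        ∏ j ∈ Ico (κ.rowLen r) (ρ'.rowLen r), columnLabel z u ρ' (r, j) := by
    intro r hr
    have hr := mem_range.1 hr
    simp only [columnLabel, YoungDiagram.mem_iff_lt_rowLen, hκρ.rowLen_eq r (by omega),
      hρ'l.rowLen_eq r (by omega), hρ'l.rowLen_eq (r + 1) (by omega)]
  rw [hκρ.prod_const hρN htN, hρl.prod_columnLabel hlN htN, prod_range_succ,
    prod_congr rfl upper_rows, prod_row_columnLabel z u (le_iff_rowLen_le.1 hρl.le t),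
    hκρ'.prod_columnLabel hρ'N htN.le, hρ'l.prod_const hlN htN,
    sum_eq_sum_Ico_succ_bot htN, ← hρ'l.rowLen_eq t t.lt_succ_self,
    hκρ.rowLen_eq t t.lt_succ_self, sum_rowLen_sub hκρ.le, sum_rowLen_sub hρl.le,
    sum_rowLen_sub hκρ'.le, sum_rowLen_sub hρ'l.le]
  have exponent_sum := sum_rowLen_add_sum_rowLen hlN htN h
  have := sum_rowLen_le hκρ.le (Ico (t + 1) N)
  have := sum_rowLen_le hρl.le (Ico (t + 1) N)
  have := sum_rowLen_le hκρ'.le (Ico (t + 1) N)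
  have := sum_rowLen_le hρ'l.le (Ico (t + 1) N)
  have := le_iff_rowLen_le.1 (hκρ.le.trans hρl.le) t
  have := l.rowLen_anti t (t + 1) t.le_succ
  have regroup (A : R) {a b c d e f : ℕ} (hu : a + b = f) (hz : c + d = e) :
      u t ^ a * (A * (u t ^ b * z ^ c) * z ^ d) = A * z ^ e * u t ^ f := by
    subst hu hz
    ring
  exact regroup _ (by omega) (by omega)

/-- The transfer matrix, indexed by the subdiagrams of `L`, whose entry at `(κ, l)` is the product
of the weights `f l c` of the cells `c` of `l / κ` when `S κ l` holds, and zero otherwise. -/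
noncomputable def skewMatrix (L : YoungDiagram) (S : YoungDiagram → YoungDiagram → Prop)
    (f : YoungDiagram → ℕ × ℕ → R) : Matrix (Set.Iic L) (Set.Iic L) R :=
  open Classical in
  Matrix.of fun κ l ↦ if S κ l then ∏ c ∈ l.1.cells \ κ.1.cells, f l c else 0

open Classical in
theorem skewMatrix_mul_skewMatrix_apply (L : YoungDiagram)
    (S S' : YoungDiagram → YoungDiagram → Prop) (f f' : YoungDiagram → ℕ × ℕ → R)
    (κ l : Set.Iic L) :
    (skewMatrix L S f * skewMatrix L S' f') κ l = ∑ ρ : Set.Iic L with S κ.1 ρ.1 ∧ S' ρ.1 l.1,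
      (∏ c ∈ ρ.1.cells \ κ.1.cells, f ρ.1 c) * ∏ c ∈ l.1.cells \ ρ.1.cells, f' l c := by
  simp only [Matrix.mul_apply, skewMatrix, Matrix.of_apply, ite_zero_mul_ite_zero, sum_filter]

/-- The transfer matrix adding a horizontal strip of cells of weight `w` in the rows from `s` on. -/
noncomputable def stripMatrix (L : YoungDiagram) (s : ℕ) (w : R) :
    Matrix (Set.Iic L) (Set.Iic L) R :=
  skewMatrix L (IsHorizontalStrip s) fun _ _ ↦ w

/-- The transfer matrix adding a skew shape which is a horizontal strip from row `s` on, the cells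
having the weights `columnLabel z u`. -/
noncomputable def columnMatrix (L : YoungDiagram) (s : ℕ) (z : R) (u : ℕ → R) :
    Matrix (Set.Iic L) (Set.Iic L) R :=
  skewMatrix L (IsHorizontalStripFrom s) (columnLabel z u)

theorem semiconjBy_stripMatrix_columnMatrix (L : YoungDiagram) (t : ℕ) (z : R) (u : ℕ → R) :
    SemiconjBy (stripMatrix L (t + 1) (u t)) (columnMatrix L (t + 1) z u)
      (columnMatrix L t z u) := by
  ext κ l
  rw [stripMatrix, columnMatrix, columnMatrix, skewMatrix_mul_skewMatrix_apply,
    skewMatrix_mul_skewMatrix_apply]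
  refine sum_bij' (fun ρ _ ↦ ⟨toggle t κ l l ρ, toggle_le.trans l.2⟩)
    (fun ρ _ ↦ ⟨toggle t κ l κ ρ, toggle_le.trans l.2⟩) ?_ ?_ ?_ ?_ ?_
  all_goals
    intro ρ hmem
    simp only [mem_filter, mem_univ, true_and, isHorizontalStrip_and_isHorizontalStripFrom_iff,
      isHorizontalStripFrom_and_isHorizontalStrip_iff] at hmem ⊢
    obtain ⟨hκl, hrow, hρ⟩ := hmem
  · exact ⟨hκl, fun r ↦ rowLen_toggle_of_le hκl le_rfl hρ, interlaces_toggle hκl le_rfl hρ⟩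
  · exact ⟨hκl, fun r ↦ rowLen_toggle_of_le le_rfl hκl hρ, interlaces_toggle le_rfl hκl hρ⟩
  · exact Subtype.ext (toggle_toggle hκl le_rfl hρ le_rfl hκl hrow)
  · exact Subtype.ext (toggle_toggle le_rfl hκl hρ hκl le_rfl hrow)
  · obtain ⟨hκρ, hρl⟩ := isHorizontalStrip_and_isHorizontalStripFrom_iff.2 ⟨hκl, hrow, hρ⟩
    obtain ⟨hκρ', hρ'l⟩ := isHorizontalStripFrom_and_isHorizontalStrip_iff.2
      ⟨hκl, fun r ↦ rowLen_toggle_of_le hκl le_rfl hρ, interlaces_toggle hκl le_rfl hρ⟩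
    exact prod_toggle_weight z u hκρ hρl hκρ' hρ'l fun r ↦
      rowLen_add_rowLen_toggle hκl le_rfl hρ

theorem stripMatrix_zero (L : YoungDiagram) (z : R) (u : ℕ → R) :
    stripMatrix L 0 z = columnMatrix L 0 z u := by
  classical
  ext κ l
  rw [stripMatrix, columnMatrix, isHorizontalStrip_zero]
  refine ite_congr rfl (fun h ↦ prod_congr rfl fun ⟨r, j⟩ hc ↦ ?_) fun _ ↦ rfl
  refine (if_neg fun hbelow ↦ (mem_sdiff.1 hc).2 ?_).symm
  exact YoungDiagram.mem_iff_lt_rowLen.2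
    ((YoungDiagram.mem_iff_lt_rowLen.1 hbelow).trans_le (h.rowLen_succ_le r r.zero_le))

end Commutation

section Transfer

open Finset

instance instDecidableEqYoungDiagram : DecidableEq YoungDiagram :=
  fun _ _ ↦ decidable_of_iff _ YoungDiagram.ext_iff.symm

theorem semiconjBy_prod_ofFn {M : Type*} [Monoid M] {n : ℕ} {d : M} {f g : Fin n → M}
    (h : ∀ t, SemiconjBy d (f t) (g t)) : SemiconjBy d (List.ofFn f).prod (List.ofFn g).prod := by
  induction n with
  | zero => simp
  | succ n ih =>
    simp only [List.ofFn_succ, List.prod_cons]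
    exact (h 0).mul_right (ih fun t ↦ h t.succ)

section

variable {R : Type*} [CommSemiring R]

theorem stripMatrix_bot_apply (L : YoungDiagram) (s : ℕ) (w : R) (b : Set.Iic L) :
    stripMatrix L (s + 1) w ⊥ b = (1 : Matrix (Set.Iic L) (Set.Iic L) R) ⊥ b := by
  have strip_bot : IsHorizontalStrip (s + 1) ⊥ ⊥ := ⟨le_rfl, fun _ _ ↦ rfl, by simp [rowLen_bot]⟩
  rw [stripMatrix, skewMatrix, Matrix.of_apply, Matrix.one_apply]
  by_cases hb : ⊥ = b
  · subst hb
    simp [strip_bot]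
  · have not_strip : ¬IsHorizontalStrip (s + 1) (⊥ : Set.Iic L).1 b := fun h ↦
      hb (Subtype.ext (eq_bot_of_isHorizontalStrip_bot h).symm)
    rw [if_neg not_strip, if_neg hb]

theorem semiconjBy_prod_stripMatrix (L : YoungDiagram) (m : ℕ) (z : R) (u : ℕ → R) :
    SemiconjBy (List.ofFn fun r : Fin m ↦ stripMatrix L (r + 1) (u r)).prod
      (columnMatrix L m z u) (columnMatrix L 0 z u) := by
  induction m with
  | zero => simp
  | succ m ih =>
    rw [List.ofFn_succ', List.concat_eq_append, List.prod_append, List.prod_singleton]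
    exact ih.mul_left (semiconjBy_stripMatrix_columnMatrix L m z u)

theorem prod_stripMatrix_bot_apply (L : YoungDiagram) (k m : ℕ) (ζ : ℕ → R) (b : Set.Iic L) :
    (List.ofFn fun t : Fin (k + 1 + m) ↦ stripMatrix L (t - k) (ζ t)).prod ⊥ b =
      (List.ofFn fun t : Fin (k + 1) ↦ columnMatrix L m (ζ t) fun r ↦ ζ (k + 1 + r)).prod ⊥ b := by
  set lower := (List.ofFn fun r : Fin m ↦ stripMatrix L (r + 1) (ζ (k + 1 + r))).prod
  have split : (List.ofFn fun t : Fin (k + 1 + m) ↦ stripMatrix L (t - k) (ζ t)).prod =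
      (List.ofFn fun t : Fin (k + 1) ↦ columnMatrix L 0 (ζ t) fun r ↦ ζ (k + 1 + r)).prod *
        lower := by
    rw [List.ofFn_add, List.prod_append]
    congr 3
    · funext t
      have hsub : (t : ℕ) - k = 0 := Nat.sub_eq_zero_of_le (Nat.lt_succ_iff.1 t.2)
      simp [stripMatrix_zero L _ fun r ↦ ζ (k + 1 + r), hsub]
    · funext r
      simp [Nat.add_right_comm k 1, Nat.add_assoc k]
  have lower_row (b : Set.Iic L) : lower ⊥ b = (1 : Matrix (Set.Iic L) (Set.Iic L) R) ⊥ b :=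
    prod_row_eq_one (by simp [List.mem_ofFn, stripMatrix_bot_apply]) b
  have commute := semiconjBy_prod_ofFn fun t : Fin (k + 1) ↦
    semiconjBy_prod_stripMatrix L m (ζ t) fun r ↦ ζ (k + 1 + r)
  rw [split, ← commute.eq, mul_apply_of_row_eq_one lower_row]

end

/-- The number of occurrences of each label among the cells added along a sequence of diagrams, a
cell `x` added in step `t` with result `l` having the label `label t l x`. -/
noncomputable def content {L : YoungDiagram} {n : ℕ}
    (label : Fin n → YoungDiagram → ℕ × ℕ → ℕ) (c : Fin (n + 1) → Set.Iic L) : ℕ →₀ ℕ :=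
  ∑ t, ∑ x ∈ (c t.succ).1.cells \ (c t.castSucc).1.cells, Finsupp.single (label t (c t.succ) x) 1

theorem content_apply {L : YoungDiagram} {n : ℕ} (label : Fin n → YoungDiagram → ℕ × ℕ → ℕ)
    (c : Fin (n + 1) → Set.Iic L) (i : ℕ) :
    content label c i =
      ∑ t, #{x ∈ (c t.succ).1.cells \ (c t.castSucc).1.cells | label t (c t.succ) x = i} := by
  simp [content, Finsupp.finsetSum_apply, Finsupp.single_apply, sum_boole]

open Classical MvPolynomial in
theorem prod_skewMatrix_X_apply {L : YoungDiagram} {n : ℕ}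
    (S : Fin n → YoungDiagram → YoungDiagram → Prop) (label : Fin n → YoungDiagram → ℕ × ℕ → ℕ)
    (a b : Set.Iic L) :
    (List.ofFn fun t ↦ skewMatrix L (S t) fun l x ↦ (X (label t l x) : MvPolynomial ℕ ℕ)).prod a b =
      ∑ c : Fin (n + 1) → Set.Iic L with IsWalk (fun t κ l ↦ S t κ.1 l.1) a b c,
        monomial (content label c) 1 := by
  simp only [skewMatrix]
  rw [prod_ofFn_ite_apply (fun t (κ l : Set.Iic L) ↦ S t κ.1 l.1)
    fun t κ l ↦ ∏ x ∈ l.1.cells \ κ.1.cells, X (label t l.1 x)]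
  simp only [content, monomial_sum_one, X]

open MvPolynomial in
theorem card_walks_eq_card_walks (L : YoungDiagram) (k m : ℕ) (hL : L.rowLen (m + 1) = 0)
    (b : Set.Iic L) (Q : (ℕ →₀ ℕ) → Prop) :
    Nat.card {c : Fin (k + 2) → Set.Iic L // IsWalk (fun _ ↦ (· ≤ ·)) ⊥ b c ∧
        Q (content (fun t ↦ columnLabel t (k + 1 + ·)) c)} =
      Nat.card {c : Fin (k + 1 + m + 1) → Set.Iic L //
        IsWalk (fun t κ l ↦ IsHorizontalStrip (t - k) κ.1 l.1) ⊥ b c ∧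
          Q (content (fun t _ _ ↦ t) c)} := by
  classical
  have le_eq : (fun κ l : Set.Iic L ↦ κ ≤ l) = fun κ l ↦ IsHorizontalStripFrom m κ.1 l.1 := by
    ext κ l
    have hl : l.1.rowLen (m + 1) = 0 := Nat.eq_zero_of_le_zero (hL ▸ le_iff_rowLen_le.1 l.2 (m + 1))
    exact ⟨fun h ↦ isHorizontalStripFrom_of_rowLen_eq_zero h hl, fun h ↦ h.le⟩
  have column_eq (t : Fin (k + 1)) : columnMatrix L m (X (t : ℕ)) (fun r ↦ X (k + 1 + r)) =
      skewMatrix L (IsHorizontalStripFrom m) fun l x ↦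
        (X (columnLabel (t : ℕ) (k + 1 + ·) l x) : MvPolynomial ℕ ℕ) := by
    simp only [columnMatrix, columnLabel, apply_ite X]
    rfl
  have sums := prod_stripMatrix_bot_apply L k m (X : ℕ → MvPolynomial ℕ ℕ) b
  simp only [column_eq, stripMatrix] at sums
  rw [prod_skewMatrix_X_apply (fun t : Fin (k + 1 + m) ↦ IsHorizontalStrip (t - k)) fun t _ _ ↦ t,
    prod_skewMatrix_X_apply (fun _ : Fin (k + 1) ↦ IsHorizontalStripFrom m) fun t ↦
      columnLabel t (k + 1 + ·)] at sums
  have counts := card_filter_comp_eq_of_map_eq_map (map_eq_map_of_sum_monomial_eq sums) Q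
  simp only [le_eq, Nat.card_eq_fintype_card, Fintype.card_subtype, ← filter_filter]
  exact counts.symm

end Transfer

section Paths

open Finset

variable {x y k : ℕ}

/-- The Young diagram lying to the upper left of a lattice path. Rows are numbered from `0`, so that
row `r` lies between the heights `y - r - 1` and `y - r`. -/
def diagramOfPath (h : Fin x →o Fin (y + 1)) : YoungDiagram where
  cells := {c ∈ range y ×ˢ range x | ∃ hc : c.2 < x, (h ⟨c.2, hc⟩ : ℕ) + c.1 < y}
  isLowerSet := by
    rintro ⟨r, j⟩ ⟨r', j'⟩ ⟨hr, hj⟩ hc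
    simp only [coe_filter, Set.mem_ofPred_eq, mem_product, mem_range] at hr hj hc ⊢
    obtain ⟨⟨hry, hjx⟩, _, hc⟩ := hc
    have hle : (h ⟨j', hj.trans_lt hjx⟩ : ℕ) ≤ h ⟨j, hjx⟩ := h.monotone hj
    exact ⟨⟨hr.trans_lt hry, hj.trans_lt hjx⟩, hj.trans_lt hjx, (add_le_add hle hr).trans_lt hc⟩

theorem mem_diagramOfPath {h : Fin x →o Fin (y + 1)} {c : ℕ × ℕ} :
    c ∈ diagramOfPath h ↔ ∃ hc : c.2 < x, (h ⟨c.2, hc⟩ : ℕ) + c.1 < y := by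
  rw [← YoungDiagram.mem_cells]
  simp only [diagramOfPath, mem_filter, mem_product, mem_range, and_iff_right_iff_imp]
  rintro ⟨hc, hh⟩
  exact ⟨by omega, hc⟩

theorem mk_mem_diagramOfPath {h : Fin x →o Fin (y + 1)} {r : ℕ} {j : Fin x} :
    (r, (j : ℕ)) ∈ diagramOfPath h ↔ (h j : ℕ) + r < y := by
  simp [mem_diagramOfPath]

theorem rowLen_diagramOfPath_eq_zero (B : Fin x →o Fin (y + 1)) {r : ℕ} (hr : y ≤ r) :
    (diagramOfPath B).rowLen r = 0 := by
  by_contra h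
  have hmem := YoungDiagram.mem_iff_lt_rowLen.2 (Nat.pos_of_ne_zero h)
  obtain ⟨hj, hlt⟩ := mem_diagramOfPath.1 hmem
  exact hr.not_gt (Nat.lt_of_add_left_lt hlt)

theorem diagramOfPath_le_diagramOfPath {g h : Fin x →o Fin (y + 1)} :
    diagramOfPath g ≤ diagramOfPath h ↔ h ≤ g := by
  constructor
  · intro hle j
    by_contra! hlt
    have hlt : (g j : ℕ) < h j := hlt
    have hmem : (y - 1 - g j, (j : ℕ)) ∈ diagramOfPath g := mk_mem_diagramOfPath.2 (by omega)
    have := mk_mem_diagramOfPath.1 (hle hmem)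
    omega
  · rintro hle c hc
    obtain ⟨hj, hc⟩ := mem_diagramOfPath.1 hc
    have : (h ⟨c.2, hj⟩ : ℕ) ≤ g ⟨c.2, hj⟩ := hle _
    exact mem_diagramOfPath.2 ⟨hj, by omega⟩

theorem diagramOfPath_injective :
    Function.Injective (diagramOfPath : (Fin x →o Fin (y + 1)) → YoungDiagram) := fun _ _ h ↦
  le_antisymm (diagramOfPath_le_diagramOfPath.1 h.ge) (diagramOfPath_le_diagramOfPath.1 h.le)

theorem diagramOfPath_top : diagramOfPath (⊤ : Fin x →o Fin (y + 1)) = ⊥ :=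
  le_bot_iff.1 fun c hc ↦ by
    obtain ⟨hj, hc⟩ := mem_diagramOfPath.1 hc
    simp at hc

/-- The lattice path cutting off the diagram `μ` from the upper left corner of the `y × x` grid. -/
def pathOfDiagram (x y : ℕ) (μ : YoungDiagram) : Fin x →o Fin (y + 1) where
  toFun j := ⟨y - μ.colLen j, by omega⟩
  monotone' _ _ hij := Nat.sub_le_sub_left (μ.colLen_anti _ _ hij) y

theorem diagramOfPath_pathOfDiagram {μ : YoungDiagram} {h : Fin x →o Fin (y + 1)}
    (hμ : μ ≤ diagramOfPath h) : diagramOfPath (pathOfDiagram x y μ) = μ := by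
  refine YoungDiagram.ext (Finset.ext fun ⟨r, j⟩ ↦ ?_)
  have hpath (hj : j < x) : (pathOfDiagram x y μ ⟨j, hj⟩ : ℕ) = y - μ.colLen j := rfl
  simp only [YoungDiagram.mem_cells, mem_diagramOfPath, hpath]
  constructor
  · rintro ⟨-, hr⟩
    exact YoungDiagram.mem_iff_lt_colLen.2 (by omega)
  · intro hc
    obtain ⟨hj, hr⟩ := mem_diagramOfPath.1 (hμ hc)
    have hcol := YoungDiagram.mem_iff_lt_colLen.1 hc
    exact ⟨hj, by dsimp only at hr; omega⟩

theorem pathOfDiagram_diagramOfPath (h : Fin x →o Fin (y + 1)) :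
    pathOfDiagram x y (diagramOfPath h) = h :=
  diagramOfPath_injective (diagramOfPath_pathOfDiagram le_rfl)

theorem extP_zero (T B : Fin x → Fin (y + 1)) (P : Fin k → Fin x → Fin (y + 1)) :
    extP T B P 0 = T := rfl

theorem extP_last (T B : Fin x → Fin (y + 1)) (P : Fin k → Fin x → Fin (y + 1)) :
    extP T B P (Fin.last (k + 1)) = B := by
  simp [extP]

theorem extP_castSucc_succ (T B : Fin x → Fin (y + 1)) (P : Fin k → Fin x → Fin (y + 1))
    (i : Fin k) : extP T B P i.succ.castSucc = P i := by
  simp [extP, i.2.ne]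

theorem eq_zero_or_eq_last_or_eq_castSucc_succ (t : Fin (k + 2)) :
    t = 0 ∨ t = Fin.last (k + 1) ∨ ∃ i : Fin k, t = i.succ.castSucc := by
  revert t
  rw [Fin.forall_fin_succ', Fin.forall_fin_succ]
  simp

theorem InPk.antitone {T B : Fin x → Fin (y + 1)} {P : Fin k → Fin x → Fin (y + 1)}
    (hP : InPk T B P) : Antitone P := by
  cases k with
  | zero => exact fun i ↦ i.elim0
  | succ k => exact Fin.antitone_iff_succ_le.2 fun i ↦ hP.2 i.castSucc (Nat.succ_lt_succ i.2)

theorem InPk.monotone_extP {T B : Fin x → Fin (y + 1)} {P : Fin k → Fin x → Fin (y + 1)}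
    (hP : InPk T B P) (hT : Monotone T) (hB : Monotone B) (t : Fin (k + 2)) :
    Monotone (extP T B P t) := by
  obtain rfl | rfl | ⟨i, rfl⟩ := eq_zero_or_eq_last_or_eq_castSucc_succ t
  · rwa [extP_zero]
  · rwa [extP_last]
  · rw [extP_castSucc_succ]
    exact (hP.1 i).1

theorem InPk.antitone_extP {T B : Fin x → Fin (y + 1)} {P : Fin k → Fin x → Fin (y + 1)}
    (hP : InPk T B P) (hTB : B ≤ T) : Antitone (extP T B P) := by
  have bounds (t : Fin (k + 2)) : B ≤ extP T B P t ∧ extP T B P t ≤ T := by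
    obtain rfl | rfl | ⟨i, rfl⟩ := eq_zero_or_eq_last_or_eq_castSucc_succ t
    · exact ⟨hTB, le_rfl⟩
    · rw [extP_last]
      exact ⟨le_rfl, hTB⟩
    · rw [extP_castSucc_succ]
      exact ⟨fun j ↦ ((hP.1 i).2 j).1, fun j ↦ ((hP.1 i).2 j).2⟩
  intro s t hst
  obtain rfl | rfl | ⟨i, rfl⟩ := eq_zero_or_eq_last_or_eq_castSucc_succ s
  · exact (bounds t).2
  · rw [Fin.last_le_iff.1 hst]
  · obtain rfl | rfl | ⟨i', rfl⟩ := eq_zero_or_eq_last_or_eq_castSucc_succ t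
    · exact absurd (Fin.le_zero_iff.1 hst) (by simp [Fin.ext_iff])
    · rw [extP_last]
      exact (bounds _).1
    · simp only [extP_castSucc_succ]
      exact hP.antitone (by simpa using hst)

theorem inPk_of_antitone_extP {T B : Fin x → Fin (y + 1)} {P : Fin k → Fin x → Fin (y + 1)}
    (hmono : ∀ i, Monotone (P i)) (hanti : Antitone (extP T B P)) : InPk T B P := by
  refine ⟨fun i ↦ ⟨hmono i, fun j ↦ ⟨?_, ?_⟩⟩, fun i hi j ↦ ?_⟩
  · simpa only [extP_castSucc_succ, extP_last] using hanti (Fin.le_last i.succ.castSucc) j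
  · simpa only [extP_castSucc_succ, extP_zero] using hanti (Fin.zero_le i.succ.castSucc) j
  · have hle : i.succ.castSucc ≤ (Fin.succ ⟨i + 1, hi⟩).castSucc := by simp [Fin.le_def]
    simpa only [extP_castSucc_succ] using hanti hle j

/-- The chain of diagrams `λ(⊤,P_0) ≤ λ(⊤,P_1) ≤ … ≤ λ(⊤,P_{k+1})` of a tuple of paths. -/
def diagramsOfPaths (B : Fin x →o Fin (y + 1)) {P : Fin k → Fin x → Fin (y + 1)}
    (hP : InPk ⊤ B P) (t : Fin (k + 2)) : Set.Iic (diagramOfPath B) :=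
  ⟨diagramOfPath ⟨extP ⊤ B P t, hP.monotone_extP monotone_const B.monotone t⟩,
    diagramOfPath_le_diagramOfPath.2 <|
      (extP_last ⊤ B P).ge.trans (hP.antitone_extP le_top (Fin.le_last t))⟩

theorem isWalk_diagramsOfPaths {B : Fin x →o Fin (y + 1)} {P : Fin k → Fin x → Fin (y + 1)}
    (hP : InPk ⊤ B P) : IsWalk (fun _ ↦ (· ≤ ·)) ⊥ ⊤ (diagramsOfPaths B hP) where
  source := Subtype.ext diagramOfPath_top
  target := Subtype.ext <| congrArg diagramOfPath <| OrderHom.ext _ _ <| extP_last ⊤ B P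
  step t := diagramOfPath_le_diagramOfPath.2 <| hP.antitone_extP le_top t.castSucc_le_succ

theorem extP_pathOfDiagram {B : Fin x →o Fin (y + 1)} {S : Fin (k + 1) → _}
    {c : Fin (k + 2) → Set.Iic (diagramOfPath B)} (hc : IsWalk S ⊥ ⊤ c) (t : Fin (k + 2)) :
    extP ⊤ B (fun i ↦ pathOfDiagram x y (c i.succ.castSucc)) t = pathOfDiagram x y (c t) := by
  obtain rfl | rfl | ⟨i, rfl⟩ := eq_zero_or_eq_last_or_eq_castSucc_succ t
  · rw [extP_zero, hc.source]
    have path_bot : pathOfDiagram x y ⊥ = ⊤ := by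
      rw [← diagramOfPath_top, pathOfDiagram_diagramOfPath]
    exact congrArg DFunLike.coe path_bot.symm
  · rw [extP_last, hc.target]
    exact congrArg DFunLike.coe (pathOfDiagram_diagramOfPath B).symm
  · rw [extP_castSucc_succ]

theorem inPk_pathOfDiagram {B : Fin x →o Fin (y + 1)}
    {c : Fin (k + 2) → Set.Iic (diagramOfPath B)} (hc : IsWalk (fun _ ↦ (· ≤ ·)) ⊥ ⊤ c) :
    InPk ⊤ B fun i ↦ pathOfDiagram x y (c i.succ.castSucc) := by
  refine inPk_of_antitone_extP (fun i ↦ OrderHom.monotone _) fun s t hst ↦ ?_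
  rw [extP_pathOfDiagram hc, extP_pathOfDiagram hc]
  refine diagramOfPath_le_diagramOfPath.1 ?_
  rw [diagramOfPath_pathOfDiagram (c s).2, diagramOfPath_pathOfDiagram (c t).2]
  exact Fin.monotone_iff_le_succ.2 hc.step hst

/-- The bijection between the tuples of paths and the multichains of diagrams from `⊥` to
`diagramOfPath B`. -/
def pathsEquivWalks (k : ℕ) (B : Fin x →o Fin (y + 1)) :
    {P : Fin k → Fin x → Fin (y + 1) // InPk ⊤ B P} ≃
      {c : Fin (k + 2) → Set.Iic (diagramOfPath B) // IsWalk (fun _ ↦ (· ≤ ·)) ⊥ ⊤ c} where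
  toFun P := ⟨diagramsOfPaths B P.2, isWalk_diagramsOfPaths P.2⟩
  invFun c := ⟨_, inPk_pathOfDiagram c.2⟩
  left_inv P := by
    refine Subtype.ext (funext fun i ↦ ?_)
    refine Eq.trans ?_ (extP_castSucc_succ ⊤ B P.1 i)
    exact congrArg DFunLike.coe (pathOfDiagram_diagramOfPath ⟨extP ⊤ B P.1 i.succ.castSucc, _⟩)
  right_inv c := by
    refine Subtype.ext (funext fun t ↦ Subtype.ext ?_)
    refine Eq.trans ?_ (diagramOfPath_pathOfDiagram (c.1 t).2)
    exact congrArg diagramOfPath (OrderHom.ext _ _ (extP_pathOfDiagram c.2 t))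

end Paths

section PathStatistics

open Finset

variable {x y k : ℕ}

theorem content_columnLabel_of_lt {L : YoungDiagram} (c : Fin (k + 2) → Set.Iic L)
    (t : Fin (k + 1)) :
    content (fun t ↦ columnLabel t (k + 1 + ·)) c t =
      #{a ∈ (c t.succ).1.cells \ (c t.castSucc).1.cells | (a.1 + 1, a.2) ∉ (c t.succ).1} := by
  rw [content_apply, sum_eq_single t]
  · congr 1
    refine filter_congr fun a _ ↦ ?_
    have := t.2
    simp only [columnLabel]
    split_ifs with hbelow
    · simp only [hbelow, not_true, iff_false]
      omega
    · simp [hbelow]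
  · intro t' _ hne
    refine card_eq_zero.2 (filter_eq_empty_iff.2 fun a _ ↦ ?_)
    have := t.2
    have := Fin.val_ne_of_ne hne
    simp only [columnLabel]
    split_ifs <;> omega
  · simp

theorem content_columnLabel_add {L : YoungDiagram} (c : Fin (k + 2) → Set.Iic L) (s : ℕ) :
    content (fun t ↦ columnLabel t (k + 1 + ·)) c (k + 1 + s) =
      ∑ t : Fin (k + 1), #{a ∈ (c t.succ).1.cells \ (c t.castSucc).1.cells |
        (a.1 + 1, a.2) ∈ (c t.succ).1 ∧ a.1 = s} := by
  rw [content_apply]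
  refine sum_congr rfl fun t _ ↦ congrArg card (filter_congr fun a _ ↦ ?_)
  have := t.2
  simp only [columnLabel]
  split_ifs with hbelow
  · simp [hbelow]
  · simp only [hbelow, false_and, iff_false]
    omega

theorem card_column_bottoms {g h : Fin x →o Fin (y + 1)} (hgh : g ≤ h) :
    #{c ∈ (diagramOfPath g).cells \ (diagramOfPath h).cells |
      (c.1 + 1, c.2) ∉ diagramOfPath g} = #{j | h j ≠ g j} := by
  refine (card_bij (fun j _ ↦ (y - 1 - g j, (j : ℕ))) ?_ ?_ ?_).symm
  · intro j hj
    have hlt : (g j : ℕ) < h j := (hgh j).lt_of_ne (mem_filter.1 hj).2.symm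
    simp only [mem_filter, mem_sdiff, YoungDiagram.mem_cells, mk_mem_diagramOfPath]
    omega
  · intro j _ j' _ heq
    exact Fin.ext (Prod.ext_iff.1 heq).2
  · rintro ⟨r, j⟩ hc
    simp only [mem_filter, mem_sdiff, YoungDiagram.mem_cells] at hc
    obtain ⟨⟨hg, hh⟩, hbelow⟩ := hc
    obtain ⟨hj, hr⟩ := mem_diagramOfPath.1 hg
    lift j to Fin x using hj
    simp only [mk_mem_diagramOfPath] at hg hh hbelow
    refine ⟨j, ?_, Prod.ext ?_ rfl⟩
    · simp only [mem_filter, mem_univ, true_and, ne_eq, Fin.ext_iff]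
      omega
    · simp only
      omega

theorem card_row_not_column_bottoms (g h : Fin x →o Fin (y + 1)) (s : ℕ) :
    #{c ∈ (diagramOfPath g).cells \ (diagramOfPath h).cells |
      (c.1 + 1, c.2) ∈ diagramOfPath g ∧ c.1 = s} =
      #{j | (g j : ℕ) < y - (s + 1) ∧ y - (s + 1) < (h j : ℕ)} := by
  refine (card_bij (fun (j : Fin x) _ ↦ (s, (j : ℕ))) ?_ ?_ ?_).symm
  · intro j hj
    have := (mem_filter.1 hj).2
    simp only [mem_filter, mem_sdiff, YoungDiagram.mem_cells, mk_mem_diagramOfPath, and_true]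
    omega
  · intro j _ j' _ heq
    exact Fin.ext (Prod.ext_iff.1 heq).2
  · rintro ⟨r, j⟩ hc
    simp only [mem_filter, mem_sdiff, YoungDiagram.mem_cells] at hc
    obtain ⟨⟨hg, hh⟩, hbelow, rfl⟩ := hc
    obtain ⟨hj, -⟩ := mem_diagramOfPath.1 hg
    lift j to Fin x using hj
    simp only [mk_mem_diagramOfPath] at hg hh hbelow
    refine ⟨j, mem_filter.2 ⟨mem_univ _, ?_⟩, rfl⟩
    omega

theorem sum_ite_step_skips_eq {n : ℕ} {e : Fin (n + 1) → ℕ} (he : Antitone e) (v : ℕ) :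
    (∑ t : Fin n, if e t.succ < v ∧ v < e t.castSucc then 1 else 0) =
      if e (Fin.last n) < v ∧ v < e 0 ∧ ∀ i, e i ≠ v then 1 else 0 := by
  induction n with
  | zero => simp; omega
  | succ n ih =>
    have first_step : (∑ t : Fin (n + 1), if e t.succ < v ∧ v < e t.castSucc then 1 else 0) =
        (if e 1 < v ∧ v < e 0 then 1 else 0) +
          if e (Fin.last (n + 1)) < v ∧ v < e 1 ∧ ∀ i : Fin (n + 1), e i.succ ≠ v
          then 1 else 0 := by
      rw [Fin.sum_univ_succ]
      exact congrArg _ (ih fun _ _ h ↦ he (Fin.succ_le_succ_iff.2 h))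
    have hlast : e (Fin.last (n + 1)) ≤ e 1 := he (Fin.le_last 1)
    have hfirst : e 1 ≤ e 0 := he (Fin.zero_le 1)
    rw [first_step]
    simp only [Fin.forall_fin_succ (P := fun i ↦ e i ≠ v)]
    by_cases hv : ∀ i : Fin (n + 1), e i.succ ≠ v
    · have h_one : e 1 ≠ v := hv 0
      simp only [ne_eq, hv, not_false_eq_true, implies_true, and_true]
      split_ifs <;> omega
    · have v_le : v ≤ e 1 := by
        push Not at hv
        obtain ⟨i, rfl⟩ := hv
        exact he (Fin.succ_le_succ_iff.2 i.zero_le)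
      simp [hv, v_le.not_gt]

theorem sum_card_steps_skipping_eq_ustat (T B : Fin x → Fin (y + 1))
    {P : Fin k → Fin x → Fin (y + 1)} (hP : Antitone (extP T B P)) (s : Fin (y - 1)) :
    ∑ t : Fin (k + 1), #{j | (extP T B P t.succ j : ℕ) < y - (s + 1) ∧
      y - (s + 1) < (extP T B P t.castSucc j : ℕ)} = ustat T B P s := by
  classical
  have skip_iff (j : Fin x) : (extP T B P (Fin.last (k + 1)) j : ℕ) < y - (s + 1) ∧
      y - (s + 1) < (extP T B P 0 j : ℕ) ∧ (∀ t, (extP T B P t j : ℕ) ≠ y - (s + 1)) ↔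
      (B j : ℕ) < y - (s + 1) ∧ y - (s + 1) < (T j : ℕ) ∧
        ∀ i, (P i j : ℕ) ≠ y - (s + 1) := by
    rw [extP_zero, extP_last]
    refine and_congr_right fun hB ↦ and_congr_right fun hT ↦ ⟨fun h i ↦ ?_, fun h t ↦ ?_⟩
    · simpa only [extP_castSucc_succ] using h i.succ.castSucc
    · obtain rfl | rfl | ⟨i, rfl⟩ := eq_zero_or_eq_last_or_eq_castSucc_succ t
      · exact hT.ne'
      · rw [extP_last]
        exact hB.ne
      · rw [extP_castSucc_succ]
        exact h i
  simp only [ustat, Nat.card_eq_fintype_card, Fintype.card_subtype, card_filter, ← skip_iff]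
  rw [sum_comm]
  exact sum_congr rfl fun j _ ↦ sum_ite_step_skips_eq (fun _ _ h ↦ hP h j) _

theorem content_diagramsOfPaths_add_hstat {B : Fin x →o Fin (y + 1)}
    {P : Fin k → Fin x → Fin (y + 1)} (hP : InPk ⊤ B P) (t : Fin (k + 1)) :
    content (fun t ↦ columnLabel t (k + 1 + ·)) (diagramsOfPaths B hP) t + hstat ⊤ B P t = x := by
  have content_eq : content (fun t ↦ columnLabel t (k + 1 + ·)) (diagramsOfPaths B hP) t =
      #{j | extP ⊤ B P t.castSucc j ≠ extP ⊤ B P t.succ j} :=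
    (content_columnLabel_of_lt _ t).trans <|
      card_column_bottoms (hP.antitone_extP le_top t.castSucc_le_succ)
  rw [content_eq, hstat, Nat.card_eq_fintype_card, Fintype.card_subtype, add_comm,
    card_filter_add_card_filter_not, card_fin]

theorem content_diagramsOfPaths_eq_ustat {B : Fin x →o Fin (y + 1)}
    {P : Fin k → Fin x → Fin (y + 1)} (hP : InPk ⊤ B P) (s : Fin (y - 1)) :
    content (fun t ↦ columnLabel t (k + 1 + ·)) (diagramsOfPaths B hP) (k + 1 + s) =
      ustat ⊤ B P s := by
  rw [content_columnLabel_add, ← sum_card_steps_skipping_eq_ustat ⊤ B (hP.antitone_extP le_top)]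
  exact sum_congr rfl fun t _ ↦ card_row_not_column_bottoms _ _ _

end PathStatistics

section Tableaux

open Finset

variable {x y k n : ℕ} {B : Fin x →o Fin (y + 1)} {S : Fin y → Fin x → ℕ}

theorem lam_eq_rowLen (B : Fin x →o Fin (y + 1)) (r : Fin y) :
    lam B r = (diagramOfPath B).rowLen r := by
  classical
  rw [lam, Nat.card_eq_fintype_card, Fintype.card_subtype, YoungDiagram.rowLen_eq_card]
  refine card_bij (fun (j : Fin x) _ ↦ ((r : ℕ), (j : ℕ))) ?_ ?_ ?_
  · intro j hj
    have hr := r.2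
    have hB := (mem_filter.1 hj).2
    exact YoungDiagram.mk_mem_row_iff.2 (mk_mem_diagramOfPath.2 (by omega))
  · intro j _ j' _ heq
    exact Fin.ext (Prod.ext_iff.1 heq).2
  · rintro ⟨r', j⟩ hc
    obtain ⟨hmem, rfl⟩ := YoungDiagram.mem_row_iff.1 hc
    obtain ⟨hj, -⟩ := mem_diagramOfPath.1 hmem
    lift j to Fin x using hj
    have hB := mk_mem_diagramOfPath.1 hmem
    exact ⟨j, mem_filter.2 ⟨mem_univ _, by omega⟩, rfl⟩

theorem lt_lam_iff {r : Fin y} {j : Fin x} :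
    (j : ℕ) < lam B r ↔ ((r : ℕ), (j : ℕ)) ∈ diagramOfPath B := by
  rw [lam_eq_rowLen, YoungDiagram.mem_iff_lt_rowLen]

theorem exists_eq_of_mem_diagramOfPath {a : ℕ × ℕ} (ha : a ∈ diagramOfPath B) :
    ∃ (r : Fin y) (j : Fin x), a = (↑r, ↑j) := by
  obtain ⟨hj, hr⟩ := mem_diagramOfPath.1 ha
  exact ⟨⟨a.1, by omega⟩, ⟨a.2, hj⟩, rfl⟩

theorem IsFlaggedSSYT.entry_mono (hS : IsFlaggedSSYT k B S) {r r' : Fin y} {j j' : Fin x}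
    (hr : r ≤ r') (hj : j ≤ j') (hmem : ((r' : ℕ), (j' : ℕ)) ∈ diagramOfPath B) :
    S r j ≤ S r' j' := by
  obtain ⟨-, row_weak, col_strict, -⟩ := hS
  have col_weak (i : ℕ) (hri : r ≤ i) :
      ∀ hi : i < y, (i, (j' : ℕ)) ∈ diagramOfPath B → S r j' ≤ S ⟨i, hi⟩ j' := by
    induction i, hri using Nat.le_induction with
    | base => exact fun _ _ ↦ le_rfl
    | succ i _ ih =>
      intro hi hmem
      exact (ih _ ((diagramOfPath B).up_left_mem i.le_succ le_rfl hmem)).trans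
        (col_strict ⟨i, i.lt_succ_self.trans hi⟩ ⟨i + 1, hi⟩ j' rfl (lt_lam_iff.2 hmem)).le
  have hmem_row := (diagramOfPath B).up_left_mem hr le_rfl hmem
  exact (row_weak r j j' hj (lt_lam_iff.2 hmem_row)).trans (col_weak r' hr r'.2 hmem)

/-- The diagram formed by the cells of `L` whose entry in `S` is at most `t`. The condition runs
over all cells to the upper left, so that a diagram results even when `S` is not a tableau. -/
def levelDiagram (L : YoungDiagram) (S : Fin y → Fin x → ℕ) (t : ℕ) : YoungDiagram where
  cells := {a ∈ L.cells | ∀ (r : Fin y) (j : Fin x), (r : ℕ) ≤ a.1 → (j : ℕ) ≤ a.2 → S r j ≤ t}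
  isLowerSet := by
    rintro a a' ⟨hr, hj⟩ ha
    simp only [coe_filter, Set.mem_ofPred_eq, YoungDiagram.mem_cells] at ha ⊢
    exact ⟨L.up_left_mem hr hj ha.1, fun r j h h' ↦ ha.2 r j (h.trans hr) (h'.trans hj)⟩

theorem levelDiagram_le (L : YoungDiagram) (S : Fin y → Fin x → ℕ) (t : ℕ) :
    levelDiagram L S t ≤ L :=
  filter_subset _ L.cells

theorem IsFlaggedSSYT.mem_levelDiagram (hS : IsFlaggedSSYT k B S) {t : ℕ} {r : Fin y}
    {j : Fin x} :
    ((r : ℕ), (j : ℕ)) ∈ levelDiagram (diagramOfPath B) S t ↔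
      ((r : ℕ), (j : ℕ)) ∈ diagramOfPath B ∧ S r j ≤ t := by
  rw [← YoungDiagram.mem_cells]
  simp only [levelDiagram, mem_filter, YoungDiagram.mem_cells]
  exact and_congr_right fun hmem ↦
    ⟨fun h ↦ h r j le_rfl le_rfl, fun h r' j' hr hj ↦ (hS.entry_mono hr hj hmem).trans h⟩

theorem IsFlaggedSSYT.isHorizontalStrip_levelDiagram (hS : IsFlaggedSSYT k B S) (t : ℕ) :
    IsHorizontalStrip (t - k) (levelDiagram (diagramOfPath B) S t)
      (levelDiagram (diagramOfPath B) S (t + 1)) where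
  le a ha := by
    obtain ⟨r, j, rfl⟩ := exists_eq_of_mem_diagramOfPath (levelDiagram_le _ S t ha)
    rw [hS.mem_levelDiagram] at ha ⊢
    exact ⟨ha.1, ha.2.trans t.le_succ⟩
  rowLen_eq r hr := by
    refine le_antisymm (rowLen_le_rowLen_iff.2 fun j ha ↦ ?_) (rowLen_le_rowLen_iff.2 fun j ha ↦ ?_)
    all_goals
      obtain ⟨r, j, ⟨⟩⟩ := exists_eq_of_mem_diagramOfPath (levelDiagram_le _ S _ ha)
      rw [hS.mem_levelDiagram] at ha ⊢
      have flag := (hS.1 r j (lt_lam_iff.2 ha.1)).2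
      exact ⟨ha.1, by omega⟩
  rowLen_succ_le r := rowLen_le_rowLen_iff.2 fun j ha ↦ by
    obtain ⟨r', j, heq⟩ := exists_eq_of_mem_diagramOfPath (levelDiagram_le _ S _ ha)
    obtain ⟨hr, rfl⟩ := Prod.mk.inj heq
    lift r to Fin y using by omega
    rw [hr, hS.mem_levelDiagram] at ha
    have col_strict := hS.2.2.1 r r' j hr (lt_lam_iff.2 ha.1)
    have hmem_above := (diagramOfPath B).up_left_mem (show (r : ℕ) ≤ r' by omega) le_rfl ha.1
    exact hS.mem_levelDiagram.2 ⟨hmem_above, by omega⟩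

/-- The sequence of the diagrams formed by the entries `≤ 0`, …, `≤ n` of a tableau. -/
def levels (n : ℕ) (B : Fin x →o Fin (y + 1)) (S : Fin y → Fin x → ℕ) (t : Fin (n + 1)) :
    Set.Iic (diagramOfPath B) :=
  ⟨levelDiagram (diagramOfPath B) S t, levelDiagram_le _ S t⟩

theorem IsFlaggedSSYT.isWalk_levels (hS : IsFlaggedSSYT k B S) (hn : k + y ≤ n) :
    IsWalk (fun (t : Fin n) κ l ↦ IsHorizontalStrip (t - k) κ.1 l.1) ⊥ ⊤ (levels n B S) where
  source := Subtype.ext <| le_bot_iff.1 fun a ha ↦ by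
    obtain ⟨r, j, rfl⟩ := exists_eq_of_mem_diagramOfPath (levelDiagram_le _ S _ ha)
    obtain ⟨hmem, entry_le⟩ := hS.mem_levelDiagram.1 ha
    exact absurd ((hS.1 r j (lt_lam_iff.2 hmem)).1.trans entry_le) (by simp)
  target := Subtype.ext <| le_antisymm (levelDiagram_le _ S _) fun a ha ↦ by
    obtain ⟨r, j, rfl⟩ := exists_eq_of_mem_diagramOfPath ha
    have flag := (hS.1 r j (lt_lam_iff.2 ha)).2
    exact hS.mem_levelDiagram.2 ⟨ha, by simp only [Fin.val_last]; omega⟩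
  step t := hS.isHorizontalStrip_levelDiagram t

/-- The tableau whose entry in a cell is the first time at which a walk of diagrams contains it. A
cell which is never reached gets the entry `sInf ∅ = 0`. -/
noncomputable def tableauOfWalk {L : YoungDiagram} (c : Fin (n + 1) → Set.Iic L) (r : Fin y)
    (j : Fin x) : ℕ :=
  sInf {t | ∃ ht : t < n + 1, ((r : ℕ), (j : ℕ)) ∈ (c ⟨t, ht⟩).1}

theorem tableauOfWalk_of_notMem {L : YoungDiagram} (c : Fin (n + 1) → Set.Iic L) {r : Fin y}
    {j : Fin x} (hmem : ((r : ℕ), (j : ℕ)) ∉ L) : tableauOfWalk c r j = 0 :=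
  Nat.sInf_eq_zero.2 <| Or.inr <| Set.eq_empty_of_forall_notMem fun t ⟨ht, h⟩ ↦
    hmem ((c ⟨t, ht⟩).2 h)

section

variable {L : YoungDiagram} {c : Fin (n + 1) → Set.Iic L}
  (hc : IsWalk (fun (t : Fin n) κ l ↦ IsHorizontalStrip (t - k) κ.1 l.1) ⊥ ⊤ c)

include hc

theorem tableauOfWalk_le_iff {r : Fin y} {j : Fin x} (hmem : ((r : ℕ), (j : ℕ)) ∈ L)
    (t : Fin (n + 1)) : tableauOfWalk c r j ≤ t ↔ ((r : ℕ), (j : ℕ)) ∈ (c t).1 := by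
  have c_mono : Monotone c := Fin.monotone_iff_le_succ.2 fun t ↦ (hc.step t).le
  constructor
  · intro hle
    obtain ⟨ht, hfirst⟩ : ∃ ht : tableauOfWalk c r j < n + 1,
        ((r : ℕ), (j : ℕ)) ∈ (c ⟨tableauOfWalk c r j, ht⟩).1 :=
      Nat.sInf_mem (s := {t | ∃ ht : t < n + 1, ((r : ℕ), (j : ℕ)) ∈ (c ⟨t, ht⟩).1})
        ⟨n, n.lt_succ_self, hc.target ▸ hmem⟩
    exact c_mono (show ⟨tableauOfWalk c r j, ht⟩ ≤ t from hle) hfirst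
  · exact fun ht ↦ Nat.sInf_le ⟨t.2, ht⟩

theorem exists_tableauOfWalk_eq_succ {r : Fin y} {j : Fin x} (hmem : ((r : ℕ), (j : ℕ)) ∈ L) :
    ∃ t : Fin n, tableauOfWalk c r j = t + 1 ∧ ((r : ℕ), (j : ℕ)) ∈ (c t.succ).1 ∧
      ((r : ℕ), (j : ℕ)) ∉ (c t.castSucc).1 := by
  have le_iff (t : Fin (n + 1)) := tableauOfWalk_le_iff hc hmem t
  have pos : 0 < tableauOfWalk c r j := by
    by_contra! hle
    have hmem_bot := (le_iff 0).1 hle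
    rw [hc.source] at hmem_bot
    exact YoungDiagram.notMem_bot _ hmem_bot
  have le_n : tableauOfWalk c r j ≤ n := (le_iff (Fin.last n)).2 (hc.target ▸ hmem)
  refine ⟨⟨tableauOfWalk c r j - 1, by omega⟩, (Nat.sub_add_cancel pos).symm, ?_, ?_⟩
  · exact (le_iff _).1 (Nat.sub_add_cancel pos).ge
  · rw [← le_iff]
    simp only [Fin.castSucc_mk]
    omega

end

theorem isFlaggedSSYT_tableauOfWalk {c : Fin (n + 1) → Set.Iic (diagramOfPath B)}
    (hc : IsWalk (fun (t : Fin n) κ l ↦ IsHorizontalStrip (t - k) κ.1 l.1) ⊥ ⊤ c) :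
    IsFlaggedSSYT k B (tableauOfWalk (y := y) (x := x) c) := by
  simp only [IsFlaggedSSYT, ← not_lt (b := lam _ _), lt_lam_iff]
  refine ⟨fun r j hmem ↦ ?_, fun r j j' hj hmem ↦ ?_, fun r r' j hr hmem ↦ ?_, fun r j hmem ↦ ?_⟩
  · obtain ⟨t, htab, hnew, hold⟩ := exists_tableauOfWalk_eq_succ hc hmem
    have row_ge : t - k ≤ r := by
      by_contra! hlt
      rw [YoungDiagram.mem_iff_lt_rowLen] at hnew hold
      exact hold (hnew.trans_eq ((hc.step t).rowLen_eq r hlt))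
    omega
  · obtain ⟨t, htab, hnew, -⟩ := exists_tableauOfWalk_eq_succ hc hmem
    have hmem_left := (diagramOfPath B).up_left_mem le_rfl hj hmem
    rw [htab]
    exact (tableauOfWalk_le_iff hc hmem_left t.succ).2 ((c t.succ).1.up_left_mem le_rfl hj hnew)
  · obtain ⟨t, htab, hnew, -⟩ := exists_tableauOfWalk_eq_succ hc hmem
    have hmem_above : ((r : ℕ), (j : ℕ)) ∈ (c t.castSucc).1 := by
      rw [← hr] at hnew
      rw [YoungDiagram.mem_iff_lt_rowLen] at hnew ⊢
      exact hnew.trans_le ((hc.step t).rowLen_succ_le r)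
    rw [htab]
    exact Nat.lt_succ_of_le <|
      (tableauOfWalk_le_iff hc ((c t.castSucc).2 hmem_above) t.castSucc).2 hmem_above
  · exact tableauOfWalk_of_notMem c hmem

theorem IsFlaggedSSYT.tableauOfWalk_levels (hS : IsFlaggedSSYT k B S) (hn : k + y ≤ n) :
    tableauOfWalk (levels n B S) = S := by
  ext r j
  by_cases hmem : ((r : ℕ), (j : ℕ)) ∈ diagramOfPath B
  · have le_iff (t : Fin (n + 1)) : tableauOfWalk (levels n B S) r j ≤ t ↔ S r j ≤ t :=
      (tableauOfWalk_le_iff (hS.isWalk_levels hn) hmem t).trans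
        (hS.mem_levelDiagram.trans (and_iff_right hmem))
    have flag := (hS.1 r j (lt_lam_iff.2 hmem)).2
    have le_entry : tableauOfWalk (levels n B S) r j ≤ S r j :=
      (le_iff ⟨S r j, by omega⟩).2 le_rfl
    have entry_le : S r j ≤ tableauOfWalk (levels n B S) r j :=
      (le_iff ⟨tableauOfWalk (levels n B S) r j, by omega⟩).1 le_rfl
    exact le_antisymm le_entry entry_le
  · rw [tableauOfWalk_of_notMem _ hmem, hS.2.2.2 r j (not_lt.1 (mt lt_lam_iff.1 hmem))]

theorem levels_tableauOfWalk {c : Fin (n + 1) → Set.Iic (diagramOfPath B)}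
    (hc : IsWalk (fun (t : Fin n) κ l ↦ IsHorizontalStrip (t - k) κ.1 l.1) ⊥ ⊤ c) :
    levels n B (tableauOfWalk c) = c := by
  have mem_iff {t : Fin (n + 1)} {r : Fin y} {j : Fin x}
      (hmem : ((r : ℕ), (j : ℕ)) ∈ diagramOfPath B) :
      ((r : ℕ), (j : ℕ)) ∈ (levels n B (tableauOfWalk c) t).1 ↔ ((r : ℕ), (j : ℕ)) ∈ (c t).1 :=
    (isFlaggedSSYT_tableauOfWalk hc).mem_levelDiagram.trans <|
      (and_iff_right hmem).trans (tableauOfWalk_le_iff hc hmem t)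
  funext t
  refine le_antisymm (fun a ha ↦ ?_) (fun a ha ↦ ?_)
  · have hmem := (levels n B (tableauOfWalk c) t).2 ha
    obtain ⟨r, j, rfl⟩ := exists_eq_of_mem_diagramOfPath hmem
    exact (mem_iff hmem).1 ha
  · have hmem := (c t).2 ha
    obtain ⟨r, j, rfl⟩ := exists_eq_of_mem_diagramOfPath hmem
    exact (mem_iff hmem).2 ha

/-- The bijection between the flagged tableaux and the walks of diagrams adding in step `t` a
horizontal strip without cells in its first `t - k` rows. -/
noncomputable def tableauxEquivWalks (B : Fin x →o Fin (y + 1)) (hn : k + y ≤ n) :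
    {S : Fin y → Fin x → ℕ // IsFlaggedSSYT k B S} ≃
      {c : Fin (n + 1) → Set.Iic (diagramOfPath B) //
        IsWalk (fun (t : Fin n) κ l ↦ IsHorizontalStrip (t - k) κ.1 l.1) ⊥ ⊤ c} where
  toFun S := ⟨levels n B S.1, S.2.isWalk_levels hn⟩
  invFun c := ⟨_, isFlaggedSSYT_tableauOfWalk c.2⟩
  left_inv S := Subtype.ext (S.2.tableauOfWalk_levels hn)
  right_inv c := Subtype.ext (levels_tableauOfWalk c.2)

theorem content_time {L : YoungDiagram} (c : Fin (n + 1) → Set.Iic L) (t : Fin n) :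
    content (fun (t : Fin n) _ _ ↦ t) c t = #((c t.succ).1.cells \ (c t.castSucc).1.cells) := by
  rw [content_apply, sum_eq_single t]
  · simp
  · intro t' _ hne
    simp [Fin.val_ne_of_ne hne]
  · simp

theorem IsFlaggedSSYT.content_levels (hS : IsFlaggedSSYT k B S) (t : Fin n) :
    content (fun (t : Fin n) _ _ ↦ t) (levels n B S) t = wt B S (t + 1) := by
  classical
  rw [content_time, wt, Nat.card_eq_fintype_card, Fintype.card_subtype]
  refine (card_bij (fun (a : Fin y × Fin x) _ ↦ ((a.1 : ℕ), (a.2 : ℕ))) ?_ ?_ ?_).symm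
  · rintro ⟨r, j⟩ ha
    obtain ⟨-, hlam, hentry⟩ := mem_filter.1 ha
    have hmem := lt_lam_iff.1 hlam
    rw [mem_sdiff, YoungDiagram.mem_cells, YoungDiagram.mem_cells]
    exact ⟨hS.mem_levelDiagram.2 ⟨hmem, hentry.le⟩, fun h ↦
      absurd (hS.mem_levelDiagram.1 h).2 (by simp [hentry])⟩
  · rintro ⟨r, j⟩ _ ⟨r', j'⟩ _ heq
    exact Prod.ext (Fin.ext (Prod.ext_iff.1 heq).1) (Fin.ext (Prod.ext_iff.1 heq).2)
  · intro a ha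
    rw [mem_sdiff, YoungDiagram.mem_cells, YoungDiagram.mem_cells] at ha
    obtain ⟨hnew, hold⟩ := ha
    obtain ⟨r, j, rfl⟩ := exists_eq_of_mem_diagramOfPath (levelDiagram_le _ S _ hnew)
    obtain ⟨hmem, entry_le⟩ := hS.mem_levelDiagram.1 hnew
    have entry_gt : t < S r j := not_le.1 fun h ↦ hold (hS.mem_levelDiagram.2 ⟨hmem, h⟩)
    have hentry : S r j = t + 1 := entry_le.antisymm entry_gt
    exact ⟨(r, j), mem_filter.2 ⟨mem_univ _, lt_lam_iff.2 hmem, hentry⟩, rfl⟩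

theorem IsFlaggedSSYT.wt_eq_zero (hS : IsFlaggedSSYT k B S) {i : ℕ} (hi : k + y < i) :
    wt B S i = 0 := by
  refine Nat.card_eq_zero.2 (Or.inl ⟨fun ⟨⟨r, j⟩, hlam, hentry⟩ ↦ ?_⟩)
  have flag := (hS.1 r j hlam).2
  simp only at hentry
  omega

end Tableaux

/-- The bijection `Ψ`: `k`-tuples in `P^k(T,B)` with statistics `(h_i)` and `(u_s)`
are equinumerous with `k`-flagged SSYT of shape `λ(T,B)` with weight
`(x−h_0, …, x−h_k, u_1, …, u_{y−1})`. -/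
theorem stmt15 {x y : ℕ} (k : ℕ) (hk : 1 ≤ k) (hy : 1 ≤ y)
    (T B : Fin x → Fin (y+1))
    (hT : ∀ j, (T j : ℕ) = y) (hB : Monotone B) (hTB : ∀ j, B j ≤ T j)
    (hBy : ∀ j, (B j : ℕ) < y)
    (a : Fin (k+1) → ℕ) (u : Fin (y-1) → ℕ) :
    Nat.card {P : Fin k → Fin x → Fin (y+1) // InPk T B P ∧
        (∀ i, hstat T B P i = a i) ∧ (∀ s, ustat T B P s = u s)}
    = Nat.card {S : Fin y → Fin x → ℕ // IsFlaggedSSYT k B S ∧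
        (∀ i : Fin (k+1), wt B S ((i : ℕ) + 1) + a i = x) ∧
        (∀ s : Fin (y-1), wt B S (k + 1 + ((s : ℕ) + 1)) = u s) ∧
        (∀ i : ℕ, k + y < i → wt B S i = 0)} := by
  obtain rfl : T = ⊤ := funext fun j ↦ Fin.ext (hT j)
  lift B to Fin x →o Fin (y + 1) using hB
  let hasWeight (w : ℕ →₀ ℕ) : Prop :=
    (∀ i : Fin (k + 1), w i + a i = x) ∧ ∀ s : Fin (y - 1), w (k + 1 + s) = u s
  have hn : k + y ≤ k + 1 + (y - 1) := by omega
  refine (card_subtype_and_congr (pathsEquivWalks k B) fun P ↦ ?_).trans <|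
    (card_walks_eq_card_walks (diagramOfPath B) k (y - 1)
      (rowLen_diagramOfPath_eq_zero B (by omega)) ⊤ hasWeight).trans
    (card_subtype_and_congr (tableauxEquivWalks B hn) fun S ↦ ?_).symm
  · have add_hstat (i : Fin (k + 1)) := content_diagramsOfPaths_add_hstat P.2 i
    have eq_ustat (s : Fin (y - 1)) := content_diagramsOfPaths_eq_ustat P.2 s
    refine and_congr (forall_congr' fun i ↦ ?_) (forall_congr' fun s ↦ (eq_ustat s).congr_left.symm)
    exact ⟨fun h ↦ h ▸ add_hstat i, fun h ↦ Nat.add_left_cancel ((add_hstat i).trans h.symm)⟩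
  · have content_eq := S.2.content_levels (n := k + 1 + (y - 1))
    rw [← and_assoc, and_iff_left fun i ↦ S.2.wt_eq_zero]
    refine and_congr (forall_congr' fun i ↦ ?_) (forall_congr' fun s ↦ ?_)
    · exact (congrArg (· + a i) (content_eq (i.castAdd _))).congr_left.symm
    · exact (content_eq (s.natAdd _)).congr_left.symm
end
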